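/- arXiv:1801.02979 — 7 statements merged into one kernel-verified Lean document; each statement's English description precedes it below -/
import Mathlib

section
/- Let 1 ≤ k ≤ L be integers, r = (r_j)_{j≥0} a nonnegative real sequence summing to 1, and u_m = ∑_{i=m}^{∞} r_i. Then for every j ≥ 0, L!·ζ̄(j,r) = f(u_j) − f(u_{j+1}). -/
open Finset

/-- The polynomial `f ≡ f^{(L,k)}` from the paper:
`f(x) = ∑_{i=1}^{k} C(L, L−k+i)·C(L−k+i−2, i−1)·(−1)^{i−1}·x^{L−k+i}`. -/
noncomputable def fLk (L k : ℕ) (x : ℝ) : ℝ :=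
  ∑ i ∈ Finset.Icc 1 k,
    (L.choose (L - k + i) : ℝ) * ((L - k + i - 2).choose (i - 1) : ℝ) *
      (-1 : ℝ) ^ (i - 1) * x ^ (L - k + i)

/-- `ζ̄(j,r)` from the paper. -/
noncomputable def zetaBar (L k : ℕ) (r : ℕ → ℝ) (j : ℕ) : ℝ :=
  ∑ i1 ∈ Finset.range k,
    (∑ m ∈ Finset.range j, r m) ^ i1 / (Nat.factorial i1 : ℝ) *
      ∑ i2 ∈ Finset.Icc 1 (L - i1),
        (min i2 (k - i1) : ℝ) * (r j ^ i2 / (Nat.factorial i2 : ℝ)) *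
          ((∑' m : ℕ, r (j + 1 + m)) ^ (L - i1 - i2) / (Nat.factorial (L - i1 - i2) : ℝ))

/-!
Let `a = ∑_{m < j} r_m`, `b = r_j` and `c = u_{j+1}`, so that `a + b + c = 1`, and let
`(N₁, N₂, N₃)` be multinomial with `L` trials and cell probabilities `(a, b, c)`. Multiplying
`ζ̄(j, r)` by `L!` turns its factorials into multinomial coefficients, so `L! ζ̄(j, r)` is the
expectation of `min(N₂, (k - N₁)⁺) = (k - N₁)⁺ - (k - (N₁ + N₂))⁺`. Merging cells, `N₁` is
binomial with parameter `a = 1 - u_j` and `N₁ + N₂` with parameter `a + b = 1 - u_{j+1}`.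
It remains to see that `f(x) = E (k - N)⁺` for `N` binomial with parameter `1 - x`: expanding
`(1 - x) ^ n`, the coefficient of `x ^ q` is an alternating sum of the `C(q, j)` weighted by
truncated linear functions, which two partial summations evaluate to `± C(q - 2, ·)`.
-/

section BinomialSum

variable {R : Type*} [CommSemiring R]

/-- The binomial sum of a weight `φ`. If `x + y = 1` this is the expectation of `φ N`, where `N` is
the number of successes in `L` trials of success probability `x`; neither normalization nor
positivity is required, which allows splitting `1 - x` into the two cells `1` and `-x`. -/
def binomialSum (L : ℕ) (x y : R) (φ : ℕ → R) : R :=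
  ∑ n ∈ range (L + 1), φ n * (L.choose n * x ^ n * y ^ (L - n))

/-- The trinomial sum of a weight `φ`. If `a + b + c = 1` this is the expectation of `φ N₁ N₂`,
where `N₁`, `N₂` count the outcomes of probability `a`, `b` in `L` trials. The multinomial
coefficient is written as `C(L, i) C(L - i, j)` to avoid division. -/
def trinomialSum (L : ℕ) (a b c : R) (φ : ℕ → ℕ → R) : R :=
  ∑ i ∈ range (L + 1), ∑ j ∈ range (L + 1 - i),
    φ i j * (L.choose i * (L - i).choose j * a ^ i * b ^ j * c ^ (L - i - j))

theorem binomialSum_add_right (L : ℕ) (a b c : R) (φ : ℕ → R) :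
    binomialSum L a (b + c) φ = trinomialSum L a b c fun i _ ↦ φ i := by
  refine sum_congr rfl fun i hi ↦ ?_
  rw [Nat.sub_add_comm (mem_range_succ_iff.1 hi), add_pow, mul_sum, mul_sum]
  exact sum_congr rfl fun j _ ↦ by ring

theorem binomialSum_add_left (L : ℕ) (a b c : R) (φ : ℕ → R) :
    binomialSum L (a + b) c φ = trinomialSum L a b c fun i j ↦ φ (i + j) := by
  rw [trinomialSum, ← sum_range_diag_flip]
  refine sum_congr rfl fun n _ ↦ ?_
  rw [add_pow, mul_sum, sum_mul, mul_sum]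
  refine sum_congr rfl fun i hi ↦ ?_
  have hin : i ≤ n := mem_range_succ_iff.1 hi
  have hchoose : (L.choose n * n.choose i : R) = L.choose i * (L - i).choose (n - i) :=
    mod_cast congrArg (Nat.cast (R := R)) (Nat.choose_mul hin)
  rw [Nat.add_sub_cancel' hin, Nat.sub_sub, Nat.add_sub_cancel' hin, ← hchoose]
  ring

end BinomialSum

theorem trinomialSum_sub {R : Type*} [CommRing R] (L : ℕ) (a b c : R) (φ ψ : ℕ → ℕ → R) :
    trinomialSum L a b c (fun i j ↦ φ i j - ψ i j) =
      trinomialSum L a b c φ - trinomialSum L a b c ψ := by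
  simp only [trinomialSum, sub_mul, sum_sub_distrib]

theorem factorial_mul_pow_div_factorial_eq_choose {K : Type*} [Field K] [CharZero K] {L i j : ℕ}
    (hi : i ≤ L) (hj : j ≤ L - i) (a b c : K) :
    (L.factorial : K) * (a ^ i / i.factorial * (b ^ j / j.factorial) *
        (c ^ (L - i - j) / (L - i - j).factorial)) =
      L.choose i * (L - i).choose j * a ^ i * b ^ j * c ^ (L - i - j) := by
  rw [Nat.cast_choose K hi, Nat.cast_choose K hj]
  have := Nat.factorial_ne_zero (L - i)
  field_simp

theorem alternating_sum_range_choose_mul_sub (p d : ℕ) :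
    ∑ j ∈ range (d + 1), (-1 : ℤ) ^ j * (p + 2).choose j * (d + 1 - j : ℕ) =
      (-1) ^ d * p.choose d := by
  induction d with
  | zero => simp
  | succ d ih =>
    have hweight : ∀ j ∈ range (d + 2), ((d + 2 - j : ℕ) : ℤ) = (d + 1 - j : ℕ) + 1 := by
      intro j hj
      rw [mem_range] at hj
      omega
    calc ∑ j ∈ range (d + 2), (-1 : ℤ) ^ j * (p + 2).choose j * (d + 2 - j : ℕ)
        = ∑ j ∈ range (d + 2), (-1 : ℤ) ^ j * (p + 2).choose j * (d + 1 - j : ℕ) +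
            ∑ j ∈ range (d + 2), (-1 : ℤ) ^ j * (p + 2).choose j := by
          rw [← sum_add_distrib]
          exact sum_congr rfl fun j hj ↦ by rw [hweight j hj]; ring
      _ = (-1) ^ d * p.choose d + (-1) ^ (d + 1) * (p + 1).choose (d + 1) := by
          rw [sum_range_succ, ih, Int.alternating_sum_range_choose_eq_choose]
          simp
      _ = (-1) ^ (d + 1) * p.choose (d + 1) := by
          rw [Nat.choose_succ_succ]
          push_cast
          ring

-- For `q = 1` the truncated `q - 2` is `0`, and the formula still holds since then `d = 1`.
theorem alternating_sum_choose_mul_tsub {q d : ℕ} (hd : 0 < d) (hdq : d ≤ q) :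
    ∑ j ∈ range (q + 1), (-1 : ℤ) ^ j * q.choose j * (d - j : ℕ) =
      (-1) ^ (d - 1) * (q - 2).choose (d - 1) := by
  obtain ⟨d, rfl⟩ := Nat.exists_eq_add_one_of_ne_zero hd.ne'
  have hrestrict : ∑ j ∈ range (q + 1), (-1 : ℤ) ^ j * q.choose j * (d + 1 - j : ℕ) =
      ∑ j ∈ range (d + 1), (-1 : ℤ) ^ j * q.choose j * (d + 1 - j : ℕ) := by
    refine (sum_subset (range_subset_range.2 (by omega)) fun j _ hj ↦ ?_).symm
    rw [Nat.sub_eq_zero_of_le (by simpa using hj), Nat.cast_zero, mul_zero]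
  rw [hrestrict, Nat.add_sub_cancel]
  obtain rfl | ⟨p, rfl⟩ : q = 1 ∨ ∃ p, q = p + 2 := by
    rcases q with _ | _ | p <;> simp_all
  · obtain rfl : d = 0 := by omega
    simp
  · exact alternating_sum_range_choose_mul_sub p d

theorem fLk_eq_sum_range {L k : ℕ} (hkL : k ≤ L) (x : ℝ) :
    fLk L k x = ∑ i ∈ range k,
      (L.choose i : ℝ) * ((-1) ^ (k - i - 1) * (L - i - 2).choose (k - i - 1)) * x ^ (L - i) := by
  refine sum_nbij' (k - ·) (k - ·) (by grind) (by grind) (by grind) (by grind)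
    fun i hi ↦ ?_
  have hik := mem_Icc.1 hi
  rw [Nat.choose_symm_of_eq_add (show L = L - k + i + (k - i) by omega),
    Nat.sub_sub_self hik.2, show L - (k - i) = L - k + i by omega]
  ring

theorem fLk_eq_binomialSum {L k : ℕ} (hkL : k ≤ L) (x : ℝ) :
    fLk L k x = binomialSum L (1 - x) x fun n ↦ (k - n : ℕ) := by
  rw [fLk_eq_sum_range hkL, sub_eq_add_neg, binomialSum_add_left, trinomialSum]
  refine sum_congr_of_eq_on_inter (by grind) (fun i _ hi ↦ ?_) fun i hi _ ↦ ?_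
  · have hki : k ≤ i := by simpa using hi
    refine sum_eq_zero fun j _ ↦ ?_
    rw [Nat.sub_eq_zero_of_le (by omega), Nat.cast_zero, zero_mul]
  · have hik : i < k := mem_range.1 hi
    have hcoeff := congrArg (Int.cast (R := ℝ))
      (alternating_sum_choose_mul_tsub (Nat.sub_pos_of_lt hik) (Nat.sub_le_sub_right hkL i))
    push_cast at hcoeff
    rw [← hcoeff, mul_sum, sum_mul, Nat.sub_add_comm (hik.le.trans hkL)]
    refine sum_congr rfl fun j hj ↦ ?_
    have hpow : x ^ (L - i) = x ^ j * x ^ (L - i - j) := by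
      rw [← pow_add, Nat.add_sub_cancel' (mem_range_succ_iff.1 hj)]
    rw [hpow, neg_pow, Nat.sub_sub k]
    ring

theorem factorial_mul_zetaBar_eq_trinomialSum (L k : ℕ) (r : ℕ → ℝ) (j : ℕ) :
    (L.factorial : ℝ) * zetaBar L k r j =
      trinomialSum L (∑ m ∈ range j, r m) (r j) (∑' m, r (j + 1 + m))
        fun i n ↦ (min n (k - i) : ℕ) := by
  rw [zetaBar, mul_sum, trinomialSum]
  refine sum_congr_of_eq_on_inter (fun i _ hi ↦ ?_) (fun i _ hi ↦ ?_) fun i hi hiL ↦ ?_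
  · have hLi : L - i = 0 := by
      rw [mem_range] at hi
      omega
    simp [hLi]
  · have hki : k - i = 0 := Nat.sub_eq_zero_of_le (by simpa using hi)
    simp [hki]
  · rw [mul_sum, mul_sum]
    refine sum_congr_of_eq_on_inter (by grind) (fun n hn hn' ↦ ?_) fun n hn _ ↦ ?_
    · obtain rfl : n = 0 := by grind
      simp
    · rw [← factorial_mul_pow_div_factorial_eq_choose (mem_range_succ_iff.1 hiL) (mem_Icc.1 hn).2,
        Nat.cast_min, Nat.cast_sub (mem_range.1 hi).le]
      ring

theorem cast_min_tsub_eq_sub (R : Type*) [AddGroupWithOne R] (k i n : ℕ) :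
    ((min n (k - i) : ℕ) : R) = (k - i : ℕ) - (k - (i + n) : ℕ) := by
  rw [← Nat.cast_sub (by omega)]
  congr 1
  omega

theorem factorial_mul_zetaBar_eq_general {L k : ℕ} (hkL : k ≤ L) {r : ℕ → ℝ} (hsum : HasSum r 1)
    {u : ℕ → ℝ} (hu : ∀ m, u m = ∑' i : ℕ, r (m + i)) (j : ℕ) :
    (L.factorial : ℝ) * zetaBar L k r j = fLk L k (u j) - fLk L k (u (j + 1)) := by
  have htail (n : ℕ) : ∑ m ∈ range n, r m + u n = 1 := by
    simpa only [hu, add_comm n, hsum.tsum_eq] using hsum.summable.sum_add_tsum_nat_add n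
  have hhead : 1 - u j = ∑ m ∈ range j, r m := by linarith [htail j]
  have hhead_succ : 1 - u (j + 1) = ∑ m ∈ range j, r m + r j := by
    rw [← sum_range_succ]
    linarith [htail (j + 1)]
  have hsplit : u j = r j + u (j + 1) := by linarith
  rw [fLk_eq_binomialSum hkL, fLk_eq_binomialSum hkL, hhead, hhead_succ, hsplit,
    binomialSum_add_right, binomialSum_add_left, ← trinomialSum_sub,
    factorial_mul_zetaBar_eq_trinomialSum, ← hu]
  simp only [cast_min_tsub_eq_sub]

/-- for `1 ≤ k ≤ L`, `r` a nonnegative sequence summing to `1`,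
and `u_m = ∑_{i=m}^∞ r_i`, one has `L!·ζ̄(j,r) = f(u_j) − f(u_{j+1})` for every `j`. -/
theorem factorial_mul_zetaBar_eq (L k : ℕ) (hk : 1 ≤ k) (hkL : k ≤ L)
    (r : ℕ → ℝ) (hr : ∀ j, 0 ≤ r j) (hsum : HasSum r 1)
    (u : ℕ → ℝ) (hu : ∀ m, u m = ∑' i : ℕ, r (m + i)) (j : ℕ) :
    (Nat.factorial L : ℝ) * zetaBar L k r j = fLk L k (u j) - fLk L k (u (j + 1)) := by
  exact factorial_mul_zetaBar_eq_general hkL hsum hu j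
end

section
/- Let 1 ≤ k ≤ L be integers, r = (r_j)_{j≥0} a nonnegative real sequence summing to 1, and u_m = ∑_{i=m}^{∞} r_i. Then for every ℓ ∈ {1,…,k} and every m ≥ 0, ∑_{j=m}^{∞} ∑_{i1=0}^{ℓ−1} C(L,i1)·(1−u_j)^{i1} · ∑_{i2=ℓ−i1}^{L−i1} C(L−i1,i2)·r_j^{i2}·u_{j+1}^{L−i1−i2} = ∑_{j=L−ℓ+1}^{L} C(L,j)·u_m^{j}·(1−u_m)^{L−j}. -/
open Finset

/-!
For `L` independent draws falling into classes `A`, `B`, `C` with weights `a`, `b`, `c`, the double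
sum with parameters `(a, b, c)` weighs the event `#A < ℓ ≤ #A + #B`, so it is the weight of
`#A < ℓ` minus the weight of `#A + #B < ℓ`. At `(a, b, c) = (1 - u_j, r_j, u_{j+1})`, where
`u_j = r_j + u_{j+1}`, this is `p(u_j) - p(u_{j+1})` for the polynomial
`p(v) = ∑_{i < ℓ} C(L, i) (1 - v)^i v^(L - i)`, and the series telescopes to `p(u_m) - p(0)`.
Since `p` is Lipschitz near `0`, it converges absolutely as soon as `∑ r_j` does.
-/

open Asymptotics Filter Polynomial Topology

section BinomialPartialSum

variable {R : Type*} [CommSemiring R]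

/-- The sum of the first `k` terms of the binomial expansion of `(x + y) ^ n`, by powers of `x`.
When `x + y = 1` this is the probability that a binomial variable with parameters `n` and `x` is
less than `k`. All `k` are allowed; the terms with `i > n` vanish. -/
def binomialPartialSum (n k : ℕ) (x y : R) : R :=
  ∑ i ∈ range k, (n.choose i : R) * x ^ i * y ^ (n - i)

theorem eval_binomialPartialSum (n k : ℕ) (p q : R[X]) (x : R) :
    (binomialPartialSum n k p q).eval x = binomialPartialSum n k (p.eval x) (q.eval x) := by
  simp [binomialPartialSum, eval_finsetSum]

theorem binomialPartialSum_zero_right {n k : ℕ} (hk : k ≤ n) (x : R) :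
    binomialPartialSum n k x 0 = 0 := by
  refine sum_eq_zero fun i hi ↦ ?_
  rw [zero_pow (Nat.sub_ne_zero_of_lt ((mem_range.1 hi).trans_le hk)), mul_zero]

theorem binomialPartialSum_of_lt {n k : ℕ} (hk : n < k) (x y : R) :
    binomialPartialSum n k x y = (x + y) ^ n := by
  rw [add_pow, binomialPartialSum]
  refine .trans ?_ (sum_congr rfl fun i _ ↦ mul_rotate _ _ _)
  refine (sum_subset (range_subset_range.2 hk) fun i _ hi ↦ ?_).symm
  rw [Nat.choose_eq_zero_of_lt (by simpa using hi), Nat.cast_zero, zero_mul, zero_mul]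

theorem binomialPartialSum_add_sum_Icc (n k : ℕ) (x y : R) :
    binomialPartialSum n k x y + ∑ i ∈ Icc k n, (n.choose i : R) * x ^ i * y ^ (n - i) =
      (x + y) ^ n := by
  rcases lt_or_ge n k with hk | hk
  · rw [Icc_eq_empty hk.not_ge, sum_empty, add_zero, binomialPartialSum_of_lt hk]
  · rw [← binomialPartialSum_of_lt n.lt_succ_self, ← Ico_succ_right_eq_Icc]
    exact sum_range_add_sum_Ico _ (hk.trans n.le_succ)

theorem binomialPartialSum_eq_sum_Icc {n k : ℕ} (hk : k ≤ n) (x y : R) :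
    binomialPartialSum n k x y =
      ∑ j ∈ Icc (n - k + 1) n, (n.choose j : R) * y ^ j * x ^ (n - j) := by
  refine sum_nbij' (n - ·) (n - ·) ?_ ?_ ?_ ?_ fun i hi ↦ ?_
  any_goals intro i hi; simp only [mem_Icc, mem_range] at *; omega
  have hin : i ≤ n := (mem_range.1 hi).le.trans hk
  rw [Nat.choose_symm hin, Nat.sub_sub_self hin, mul_right_comm]

theorem binomialPartialSum_add_left (n k : ℕ) (a b c : R) :
    binomialPartialSum n k (a + b) c =
      ∑ i ∈ range k, (n.choose i : R) * a ^ i * binomialPartialSum (n - i) (k - i) b c := by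
  simp only [binomialPartialSum, mul_sum]
  rw [← sum_range_diag_flip k fun i j ↦ (n.choose i : R) * a ^ i *
    (((n - i).choose j : R) * b ^ j * c ^ (n - i - j))]
  refine sum_congr rfl fun s _ ↦ ?_
  rw [add_pow, mul_sum, sum_mul]
  refine sum_congr rfl fun i hi ↦ ?_
  have his : i ≤ s := Nat.le_of_lt_succ (mem_range.1 hi)
  have choose_mul : (n.choose s : R) * s.choose i = n.choose i * (n - i).choose (s - i) := by
    rw [← Nat.cast_mul, Nat.choose_mul his, Nat.cast_mul]
  calc (n.choose s : R) * (a ^ i * b ^ (s - i) * s.choose i) * c ^ (n - s)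
      = (n.choose s * s.choose i) * (a ^ i * b ^ (s - i) * c ^ (n - s)) := by ring
    _ = n.choose i * a ^ i * ((n - i).choose (s - i) * b ^ (s - i) * c ^ (n - i - (s - i))) := by
      rw [choose_mul, tsub_tsub_tsub_cancel_right his]
      ring

theorem sum_trinomial_add_binomialPartialSum (n k : ℕ) (a b c : R) :
    ∑ i ∈ range k, (n.choose i : R) * a ^ i *
        ∑ j ∈ Icc (k - i) (n - i), ((n - i).choose j : R) * b ^ j * c ^ (n - i - j) +
      binomialPartialSum n k (a + b) c = binomialPartialSum n k a (b + c) := by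
  rw [binomialPartialSum_add_left, ← sum_add_distrib, binomialPartialSum]
  refine sum_congr rfl fun i _ ↦ ?_
  rw [← mul_add, add_comm, binomialPartialSum_add_sum_Icc]

end BinomialPartialSum

section Telescoping

variable {R : Type*} [NormedCommRing R]

theorem isBigO_eval_sub_eval (p : R[X]) (z₀ : R × R) :
    (fun z : R × R ↦ p.eval z.1 - p.eval z.2) =O[𝓝 z₀] fun z ↦ z.1 - z.2 := by
  induction p using Polynomial.induction_on' with
  | add p q hp hq => simpa only [eval_add, add_sub_add_comm] using hp.add hq
  | monomial n c =>
    let q (z : R × R) : R := c * ∑ i ∈ range n, z.1 ^ i * z.2 ^ (n - 1 - i)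
    have factor (z : R × R) :
        (monomial n c).eval z.1 - (monomial n c).eval z.2 = q z * (z.1 - z.2) := by
      rw [eval_monomial, eval_monomial, ← mul_sub, mul_assoc, geom_sum₂_mul]
    have q_bounded : q =O[𝓝 z₀] fun _ ↦ (1 : ℝ) :=
      (show Continuous q by fun_prop).continuousAt.isBigO_one ℝ
    simpa only [factor, one_mul, isBigO_norm_right] using
      q_bounded.mul (isBigO_refl (fun z : R × R ↦ z.1 - z.2) (𝓝 z₀)).norm_right

theorem hasSum_eval_sub_eval_succ (p : R[X]) {v : ℕ → R} {a : R} (hv : Tendsto v atTop (𝓝 a))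
    (hs : Summable fun n ↦ ‖v n - v (n + 1)‖) :
    HasSum (fun n ↦ p.eval (v n) - p.eval (v (n + 1))) (p.eval (v 0) - p.eval a) := by
  have hvv : Tendsto (fun n ↦ (v n, v (n + 1))) atTop (𝓝 (a, a)) :=
    hv.prodMk_nhds (hv.comp (tendsto_add_atTop_nat 1))
  have summable_norm : Summable fun n ↦ ‖p.eval (v n) - p.eval (v (n + 1))‖ :=
    summable_of_isBigO_nat hs ((isBigO_eval_sub_eval p (a, a)).comp_tendsto hvv).norm_norm
  rw [hasSum_iff_tendsto_nat_of_summable_norm summable_norm]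
  simp only [sum_range_sub' fun n ↦ p.eval (v n)]
  exact ((p.continuous.tendsto a).comp hv).const_sub _

end Telescoping

theorem tail_eq_add_tail_succ {M : Type*} [AddCommMonoid M] [TopologicalSpace M] [ContinuousAdd M]
    [T2Space M] {r u : ℕ → M} (hu : ∀ n, HasSum (fun i ↦ r (n + i)) (u n)) (n : ℕ) :
    u n = r n + u (n + 1) := by
  refine (hu n).unique (HasSum.zero_add (f := fun i ↦ r (n + i)) ?_)
  simpa only [add_assoc, add_comm 1] using hu (n + 1)

theorem tendsto_tail_zero {G : Type*} [AddCommGroup G] [TopologicalSpace G]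
    [IsTopologicalAddGroup G] [T2Space G] {r u : ℕ → G}
    (hu : ∀ n, HasSum (fun i ↦ r (n + i)) (u n)) :
    Tendsto u atTop (𝓝 0) := by
  refine (tendsto_sum_nat_add r).congr fun n ↦ ?_
  simpa only [add_comm n] using (hu n).tsum_eq

theorem tsum_tail_eq_binomial_tail_general {R : Type*} [NormedCommRing R] {L l : ℕ} (hl : l ≤ L)
    {r u : ℕ → R} (hr : Summable fun n ↦ ‖r n‖) (hu : ∀ n, HasSum (fun i ↦ r (n + i)) (u n))
    (m : ℕ) :
    HasSum
      (fun j ↦ ∑ i1 ∈ range l, (L.choose i1 : R) * (1 - u (m + j)) ^ i1 *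
        ∑ i2 ∈ Icc (l - i1) (L - i1),
          ((L - i1).choose i2 : R) * r (m + j) ^ i2 * u (m + j + 1) ^ (L - i1 - i2))
      (∑ j ∈ Icc (L - l + 1) L, (L.choose j : R) * u m ^ j * (1 - u m) ^ (L - j)) := by
  let p : R[X] := binomialPartialSum L l (1 - X) X
  have eval_p (x : R) : p.eval x = binomialPartialSum L l (1 - x) x := by
    rw [eval_binomialPartialSum, eval_sub, eval_one, eval_X]
  have rec_u := tail_eq_add_tail_succ hu
  have tendsto_u : Tendsto (fun j ↦ u (m + j)) atTop (𝓝 0) :=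
    (tendsto_tail_zero hu).comp (tendsto_atTop_mono (fun j ↦ j.le_add_left m) tendsto_id)
  have summable_u : Summable fun j ↦ ‖u (m + j) - u (m + (j + 1))‖ := by
    refine (hr.comp_injective (add_right_injective m)).congr fun j ↦ ?_
    simp [rec_u (m + j), add_assoc]
  rw [← binomialPartialSum_eq_sum_Icc hl]
  convert hasSum_eval_sub_eval_succ p tendsto_u summable_u using 1
  · funext j
    have one_sub_add : 1 - u (m + j) + r (m + j) = 1 - u (m + j + 1) := by
      rw [rec_u (m + j)]
      abel
    rw [eval_p, eval_p, eq_sub_iff_add_eq, ← add_assoc m, ← one_sub_add,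
      sum_trinomial_add_binomialPartialSum, ← rec_u]
  · rw [eval_p, eval_p, binomialPartialSum_zero_right hl, sub_zero, add_zero]

/-- for `1 ≤ k ≤ L`, `r` a nonnegative sequence summing to `1`,
`u_m = ∑_{i=m}^∞ r_i`, for every `ℓ ∈ {1,…,k}` and every `m ≥ 0`,
`∑_{j=m}^{∞} ∑_{i1=0}^{ℓ−1} C(L,i1)·(1−u_j)^{i1} ·
   ∑_{i2=ℓ−i1}^{L−i1} C(L−i1,i2)·r_j^{i2}·u_{j+1}^{L−i1−i2}
 = ∑_{j=L−ℓ+1}^{L} C(L,j)·u_m^{j}·(1−u_m)^{L−j}`. -/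
theorem tsum_tail_eq_binomial_tail (L k : ℕ) (hk : 1 ≤ k) (hkL : k ≤ L)
    (r : ℕ → ℝ) (hr : ∀ j, 0 ≤ r j) (hsum : HasSum r 1)
    (u : ℕ → ℝ) (hu : ∀ m', u m' = ∑' i : ℕ, r (m' + i))
    (l : ℕ) (hl1 : 1 ≤ l) (hlk : l ≤ k) (m : ℕ) :
    (∑' j : ℕ, ∑ i1 ∈ Finset.range l,
        (L.choose i1 : ℝ) * (1 - u (m + j)) ^ i1 *
          ∑ i2 ∈ Finset.Icc (l - i1) (L - i1),
            ((L - i1).choose i2 : ℝ) * r (m + j) ^ i2 * u (m + j + 1) ^ (L - i1 - i2)) =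
      ∑ j ∈ Finset.Icc (L - l + 1) L,
        (L.choose j : ℝ) * u m ^ j * (1 - u m) ^ (L - j) := by
  have hu' (n : ℕ) : HasSum (fun i ↦ r (n + i)) (u n) :=
    hu n ▸ (hsum.summable.comp_injective (add_right_injective n)).hasSum
  exact (tsum_tail_eq_binomial_tail_general (hlk.trans hkL) hsum.summable.norm hu' m).tsum_eq
end

section
/- Let 1 ≤ k < L be integers and 0 ≤ λ ≤ 1. If ū satisfies the fixed-point recursion ū_0 = 1 and ū_{m+1} = (λ/k)·f(ū_m), then for all m ≥ 0, ū_m ≤ λ^{((L/k)^m − 1)/(L/k − 1)}. -/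
open Finset

/-!
With `r = L - k`, the Chu–Vandermonde identity turns `f` into the polynomial
`∑ ν, (ν - r)⁺ * bernsteinPolynomial L ν`, the expected excess over `r` of a binomial variable with
`L` trials and success probability `x`. Applying `x * d/dx` to a polynomial in Bernstein form
replaces its coefficients `c ν` by `ν * (c ν - c (ν - 1))`, so the inequality
`(L / k) * f x ≤ x * f' x` on `[0, 1]` holds coefficient by coefficient. It says that
`f x / x ^ (L / k)` is monotone, whence `f x ≤ f 1 * x ^ (L / k) = k * x ^ (L / k)`. The recursion
thus satisfies `ū (m + 1) ≤ λ * ū m ^ (L / k)`, and the exponents of `λ` add up to a geometric sum.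
-/

section BinomialIdentities

lemma sum_antidiagonal_neg_one_pow_mul_choose_mul_choose (p q m : ℕ) :
    ∑ ij ∈ antidiagonal m, (-1 : ℤ) ^ ij.1 * (p + ij.1).choose ij.1 * (p + 1 + q).choose ij.2 =
      q.choose m := by
  have vandermonde := Ring.add_choose_eq m (Commute.all (-(p + 1 : ℤ)) ((p + 1 + q : ℕ) : ℤ))
  have choose_neg_succ (i : ℕ) :
      Ring.choose (-(p + 1 : ℤ)) i = (-1) ^ i * ((p + i).choose i : ℤ) := by
    rw [Ring.choose_neg, show (p + 1 + i - 1 : ℤ) = ((p + i : ℕ) : ℤ) by push_cast; ring,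
      Ring.choose_natCast, Units.smul_def, Int.coe_negOnePow_natCast, smul_eq_mul]
  rw [show -(p + 1 : ℤ) + ((p + 1 + q : ℕ) : ℤ) = (q : ℤ) by push_cast; ring] at vandermonde
  simpa only [choose_neg_succ, Ring.choose_natCast] using vandermonde.symm

lemma sum_range_neg_one_pow_mul_choose_mul_choose {p k t : ℕ} (ht : t ≤ p + 1 + k) :
    ∑ i ∈ range k, (-1 : ℤ) ^ i * (p + i).choose i * t.choose (p + 2 + i) =
      (t - (p + 1) : ℕ) := by
  rcases lt_or_ge t (p + 2) with hlt | hge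
  · rw [Nat.sub_eq_zero_of_le (by lia), Nat.cast_zero]
    refine sum_eq_zero fun i _ ↦ ?_
    rw [Nat.choose_eq_zero_of_lt (by lia : t < p + 2 + i), Nat.cast_zero, mul_zero]
  · obtain ⟨m, rfl⟩ := Nat.exists_eq_add_of_le hge
    have range_eq : ∑ i ∈ range (m + 1),
          (-1 : ℤ) ^ i * (p + i).choose i * (p + 2 + m).choose (p + 2 + i) =
        ∑ i ∈ range k, (-1 : ℤ) ^ i * (p + i).choose i * (p + 2 + m).choose (p + 2 + i) := by
      refine sum_subset (range_mono (by lia)) fun i _ hi ↦ ?_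
      rw [mem_range] at hi
      rw [Nat.choose_eq_zero_of_lt (by lia : p + 2 + m < p + 2 + i), Nat.cast_zero, mul_zero]
    have choose_symm {i : ℕ} (hi : i ∈ range (m + 1)) :
        (p + 2 + m).choose (p + 2 + i) = (p + 1 + (m + 1)).choose (m - i) := by
      rw [mem_range] at hi
      rw [← Nat.choose_symm (by lia)]
      congr 1 <;> lia
    have vandermonde := sum_antidiagonal_neg_one_pow_mul_choose_mul_choose p (m + 1) m
    rw [Nat.sum_antidiagonal_eq_sum_range_succ_mk, Nat.choose_succ_self_right] at vandermonde
    rw [← range_eq, sum_congr rfl fun i hi ↦ by rw [choose_symm hi], vandermonde]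
    congr 1
    lia

end BinomialIdentities

section RealPowers

lemma monotoneOn_div_rpow {f f' : ℝ → ℝ} {a b : ℝ} (hcont : ContinuousOn f (Set.Ioc 0 b))
    (hderiv : ∀ y ∈ Set.Ioo 0 b, HasDerivAt f (f' y) y)
    (hle : ∀ y ∈ Set.Ioo 0 b, a * f y ≤ y * f' y) :
    MonotoneOn (fun y ↦ f y / y ^ a) (Set.Ioc 0 b) := by
  refine monotoneOn_of_hasDerivWithinAt_nonneg (convex_Ioc 0 b)
    (f' := fun y ↦ (y * f' y - a * f y) / (y * y ^ a)) ?_ ?_ ?_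
  · exact hcont.div (continuousOn_id.rpow_const fun y hy ↦ Or.inl hy.1.ne')
      fun y hy ↦ (Real.rpow_pos_of_pos hy.1 a).ne'
  · intro y hy
    rw [interior_Ioc] at hy
    have hy₀ : y ≠ 0 := hy.1.ne'
    have hpow : y ^ a ≠ 0 := (Real.rpow_pos_of_pos hy.1 a).ne'
    refine (((hderiv y hy).div (Real.hasDerivAt_rpow_const (Or.inl hy₀)) hpow).congr_deriv
      ?_).hasDerivWithinAt
    rw [Real.rpow_sub_one hy₀]
    field_simp
  · intro y hy
    rw [interior_Ioc] at hy
    exact div_nonneg (sub_nonneg.mpr (hle y hy))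
      (mul_nonneg hy.1.le (Real.rpow_nonneg hy.1.le a))

lemma le_rpow_geom_sum {u : ℕ → ℝ} {c a : ℝ} (hc : 0 ≤ c) (ha : 0 ≤ a) (hu : ∀ m, 0 ≤ u m)
    (h₀ : u 0 ≤ 1) (hstep : ∀ m, u (m + 1) ≤ c * u m ^ a) (m : ℕ) :
    u m ≤ c ^ ∑ i ∈ range m, a ^ i := by
  induction m with
  | zero => simpa using h₀
  | succ m ih =>
    have hsum : 0 ≤ ∑ i ∈ range m, a ^ i := sum_nonneg fun i _ ↦ pow_nonneg ha i
    calc u (m + 1) ≤ c * u m ^ a := hstep m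
      _ ≤ c * (c ^ ∑ i ∈ range m, a ^ i) ^ a := by gcongr; exact hu m
      _ = c ^ (1 + (∑ i ∈ range m, a ^ i) * a) := by
        rw [Real.rpow_add_of_nonneg hc zero_le_one (mul_nonneg hsum ha), Real.rpow_one,
          Real.rpow_mul hc]
      _ = c ^ ∑ i ∈ range (m + 1), a ^ i := by rw [geom_sum_succ, mul_comm a, add_comm]

end RealPowers

section BernsteinForm

open Polynomial

variable {R : Type*} [CommRing R]

lemma choose_mul_bernsteinPolynomial_add (n j ν : ℕ) :
    ((ν + j).choose j : R[X]) * bernsteinPolynomial R (n + j) (ν + j) =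
      ((n + j).choose j : R[X]) * X ^ j * bernsteinPolynomial R n ν := by
  have trinomial : ((n + j).choose (ν + j) * (ν + j).choose j : R[X]) =
      ((n + j).choose j * n.choose ν : R[X]) := by
    have h := Nat.choose_mul (n := n + j) (Nat.le_add_left j ν)
    rw [Nat.add_sub_cancel, Nat.add_sub_cancel] at h
    exact_mod_cast congrArg (Nat.cast : ℕ → R[X]) h
  simp only [bernsteinPolynomial, Nat.add_sub_add_right, pow_add]
  linear_combination X ^ ν * X ^ j * (1 - X) ^ (n - ν) * trinomial

lemma natCast_mul_X_mul_bernsteinPolynomial (n ν : ℕ) :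
    (n : R[X]) * X * bernsteinPolynomial R (n - 1) ν =
      ((ν : R[X]) + 1) * bernsteinPolynomial R n (ν + 1) := by
  cases n with
  | zero => simp [bernsteinPolynomial.eq_zero_of_lt]
  | succ n => simpa using (choose_mul_bernsteinPolynomial_add (R := R) n 1 ν).symm

lemma X_mul_derivative_bernsteinPolynomial (n ν : ℕ) :
    X * derivative (bernsteinPolynomial R n ν) =
      (ν : R[X]) * bernsteinPolynomial R n ν -
        ((ν : R[X]) + 1) * bernsteinPolynomial R n (ν + 1) := by
  cases ν with
  | zero =>
    rw [bernsteinPolynomial.derivative_zero]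
    linear_combination -natCast_mul_X_mul_bernsteinPolynomial (R := R) n 0
  | succ ν =>
    rw [bernsteinPolynomial.derivative_succ]
    have h₁ := natCast_mul_X_mul_bernsteinPolynomial (R := R) n ν
    have h₂ := natCast_mul_X_mul_bernsteinPolynomial (R := R) n (ν + 1)
    push_cast at h₁ h₂ ⊢
    linear_combination h₁ - h₂

/-- The polynomial in Bernstein form of degree at most `n` with coefficients `c 0, …, c n`, as a
linear function of `c`. The coefficients are indexed by all of `ℕ` to avoid `Fin (n + 1)`; the
values of `c` beyond `n` are ignored. -/
noncomputable def bernsteinForm (n : ℕ) : (ℕ → R) →ₗ[R] R[X] :=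
  ∑ ν ∈ range (n + 1), (LinearMap.proj ν).smulRight (bernsteinPolynomial R n ν)

lemma bernsteinForm_apply (n : ℕ) (c : ℕ → R) :
    bernsteinForm n c = ∑ ν ∈ range (n + 1), c ν • bernsteinPolynomial R n ν := by
  simp [bernsteinForm]

lemma bernsteinForm_congr {n : ℕ} {c d : ℕ → R} (h : ∀ ν ≤ n, c ν = d ν) :
    bernsteinForm n c = bernsteinForm n d := by
  rw [bernsteinForm_apply, bernsteinForm_apply]
  exact sum_congr rfl fun ν hν ↦ by rw [h ν (mem_range_succ_iff.mp hν)]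

lemma bernsteinForm_choose (n j : ℕ) :
    bernsteinForm n (fun ν ↦ (ν.choose j : R)) = (n.choose j : R[X]) * X ^ j := by
  rw [bernsteinForm_apply]
  rcases lt_or_ge n j with hlt | hle
  · rw [Nat.choose_eq_zero_of_lt hlt, Nat.cast_zero, zero_mul]
    refine sum_eq_zero fun ν hν ↦ ?_
    rw [Nat.choose_eq_zero_of_lt ((mem_range_succ_iff.mp hν).trans_lt hlt), Nat.cast_zero,
      zero_smul]
  · obtain ⟨n, rfl⟩ := Nat.exists_eq_add_of_le' hle
    have low_terms : ∑ ν ∈ range j, (ν.choose j : R) • bernsteinPolynomial R (n + j) ν = 0 :=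
      sum_eq_zero fun ν hν ↦ by
        rw [Nat.choose_eq_zero_of_lt (mem_range.mp hν), Nat.cast_zero, zero_smul]
    rw [show n + j + 1 = j + (n + 1) by ring, sum_range_add, low_terms, zero_add]
    calc ∑ ν ∈ range (n + 1), ((j + ν).choose j : R) • bernsteinPolynomial R (n + j) (j + ν)
        = ∑ ν ∈ range (n + 1), ((n + j).choose j : R[X]) * X ^ j * bernsteinPolynomial R n ν :=
          sum_congr rfl fun ν _ ↦ by
            rw [Nat.cast_smul_eq_nsmul, nsmul_eq_mul, add_comm j ν,
              choose_mul_bernsteinPolynomial_add]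
      _ = ((n + j).choose j : R[X]) * X ^ j := by rw [← mul_sum, bernsteinPolynomial.sum, mul_one]

lemma X_mul_derivative_bernsteinForm (n : ℕ) (c : ℕ → R) :
    X * derivative (bernsteinForm n c) =
      bernsteinForm n (fun ν ↦ (ν : R) * (c ν - c (ν - 1))) := by
  have shift : ∑ ν ∈ range (n + 1), c ν • (((ν : R[X]) + 1) * bernsteinPolynomial R n (ν + 1)) =
      ∑ ν ∈ range (n + 1), c (ν - 1) • ((ν : R[X]) * bernsteinPolynomial R n ν) := by
    rw [sum_range_succ, bernsteinPolynomial.eq_zero_of_lt R n.lt_succ_self, sum_range_succ']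
    simp
  simp only [bernsteinForm_apply, derivative_sum, derivative_smul, mul_sum, mul_smul_comm,
    X_mul_derivative_bernsteinPolynomial, smul_sub, sum_sub_distrib]
  rw [shift, ← sum_sub_distrib]
  refine sum_congr rfl fun ν _ ↦ ?_
  simp only [smul_eq_C_mul, map_mul, map_sub, map_natCast]
  ring

lemma eval_zero_bernsteinForm (n : ℕ) (c : ℕ → R) : (bernsteinForm n c).eval 0 = c 0 := by
  simp [bernsteinForm_apply, eval_finsetSum, bernsteinPolynomial.eval_at_0]

lemma eval_one_bernsteinForm (n : ℕ) (c : ℕ → R) : (bernsteinForm n c).eval 1 = c n := by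
  simp [bernsteinForm_apply, eval_finsetSum, bernsteinPolynomial.eval_at_1]

lemma eval_bernsteinForm_le_eval_bernsteinForm [PartialOrder R] [IsOrderedRing R] {n : ℕ}
    {c d : ℕ → R} (h : ∀ ν ≤ n, c ν ≤ d ν) {x : R} (hx : x ∈ Set.Icc 0 1) :
    (bernsteinForm n c).eval x ≤ (bernsteinForm n d).eval x := by
  have bernstein_nonneg (ν : ℕ) : 0 ≤ (bernsteinPolynomial R n ν).eval x := by
    have hx₀ : 0 ≤ x := hx.1
    have hx₁ : 0 ≤ 1 - x := sub_nonneg.mpr hx.2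
    simp only [bernsteinPolynomial, eval_mul, eval_natCast, eval_pow, eval_X, eval_sub, eval_one]
    positivity
  simp only [bernsteinForm_apply, eval_finsetSum, eval_smul, smul_eq_mul]
  exact sum_le_sum fun ν hν ↦
    mul_le_mul_of_nonneg_right (h ν (mem_range_succ_iff.mp hν)) (bernstein_nonneg ν)

end BernsteinForm

section BinomialExcess

open Polynomial

/-- The expected excess `E[(T - r)⁺]` over the threshold `r` of a binomial random variable `T` with
`n` trials, as a polynomial in the success probability. The positive part is expressed by the
truncated subtraction of `ℕ`. -/
noncomputable def binomialExcess (n r : ℕ) : ℝ[X] :=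
  bernsteinForm n fun ν ↦ ((ν - r : ℕ) : ℝ)

lemma binomialExcess_eq_sum (p k : ℕ) :
    binomialExcess (p + 1 + k) (p + 1) =
      ∑ i ∈ range k, ((-1 : ℝ) ^ i * (p + i).choose i) •
        (((p + 1 + k).choose (p + 2 + i) : ℝ[X]) * X ^ (p + 2 + i)) := by
  have coeff_eq : ∀ ν ≤ p + 1 + k, ((ν - (p + 1) : ℕ) : ℝ) =
      (∑ i ∈ range k, ((-1 : ℝ) ^ i * (p + i).choose i) •
        fun ν : ℕ ↦ (ν.choose (p + 2 + i) : ℝ)) ν := by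
    intro ν hν
    have h := sum_range_neg_one_pow_mul_choose_mul_choose hν
    simp only [Finset.sum_apply, Pi.smul_apply, smul_eq_mul]
    exact_mod_cast h.symm
  simp only [binomialExcess, bernsteinForm_congr coeff_eq, map_sum, map_smul, bernsteinForm_choose]

lemma eval_zero_binomialExcess (n r : ℕ) : (binomialExcess n r).eval 0 = 0 := by
  simp [binomialExcess, eval_zero_bernsteinForm]

lemma eval_one_binomialExcess (n r : ℕ) : (binomialExcess n r).eval 1 = (n - r : ℕ) :=
  eval_one_bernsteinForm n _

lemma eval_binomialExcess_nonneg (n r : ℕ) {x : ℝ} (hx : x ∈ Set.Icc 0 1) :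
    0 ≤ (binomialExcess n r).eval x := by
  have h := eval_bernsteinForm_le_eval_bernsteinForm (n := n) (c := 0)
    (d := fun ν ↦ ((ν - r : ℕ) : ℝ)) (fun ν _ ↦ Nat.cast_nonneg _) hx
  rwa [map_zero, eval_zero] at h

lemma add_mul_tsub_le_mul_mul_sub (r k ν : ℕ) (hν : ν ≤ r + k) :
    ((r + k : ℕ) : ℝ) * ((ν - r : ℕ) : ℝ) ≤
      k * (ν * (((ν - r : ℕ) : ℝ) - ((ν - 1 - r : ℕ) : ℝ))) := by
  rcases le_or_gt ν r with hle | hlt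
  · rw [Nat.sub_eq_zero_of_le hle, Nat.sub_eq_zero_of_le (by lia)]
    simp
  · obtain ⟨s, rfl⟩ := Nat.exists_eq_add_of_lt hlt
    have hs : (s : ℝ) + 1 ≤ k := by exact_mod_cast (by lia : s + 1 ≤ k)
    rw [show r + s + 1 - r = s + 1 by lia, show r + s + 1 - 1 - r = s by lia]
    push_cast
    nlinarith [mul_le_mul_of_nonneg_left hs r.cast_nonneg]

lemma add_mul_eval_binomialExcess_le (r k : ℕ) {x : ℝ} (hx : x ∈ Set.Icc 0 1) :
    ((r + k : ℕ) : ℝ) * (binomialExcess (r + k) r).eval x ≤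
      k * (x * (derivative (binomialExcess (r + k) r)).eval x) := by
  have h := eval_bernsteinForm_le_eval_bernsteinForm
    (c := ((r + k : ℕ) : ℝ) • fun ν ↦ ((ν - r : ℕ) : ℝ))
    (d := (k : ℝ) • fun ν : ℕ ↦ (ν : ℝ) * (((ν - r : ℕ) : ℝ) - ((ν - 1 - r : ℕ) : ℝ)))
    (add_mul_tsub_le_mul_mul_sub r k) hx
  rw [map_smul, map_smul, ← X_mul_derivative_bernsteinForm] at h
  simpa only [binomialExcess, eval_smul, eval_mul, eval_X, smul_eq_mul] using h

lemma eval_binomialExcess_le {k : ℕ} (hk : 0 < k) (r : ℕ) {x : ℝ} (hx : x ∈ Set.Icc 0 1) :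
    (binomialExcess (r + k) r).eval x ≤ k * x ^ (((r + k : ℕ) : ℝ) / k) := by
  have hk₀ : (0 : ℝ) < k := Nat.cast_pos.mpr hk
  rcases hx.1.eq_or_lt with rfl | hx₀
  · rw [eval_zero_binomialExcess]
    positivity
  have hmono : MonotoneOn
      (fun y ↦ (binomialExcess (r + k) r).eval y / y ^ (((r + k : ℕ) : ℝ) / k))
      (Set.Ioc 0 1) := by
    refine monotoneOn_div_rpow (Polynomial.continuousOn _)
      (fun y _ ↦ (binomialExcess (r + k) r).hasDerivAt y) fun y hy ↦ ?_
    rw [div_mul_eq_mul_div, div_le_iff₀' hk₀]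
    exact add_mul_eval_binomialExcess_le r k (Set.Ioo_subset_Icc_self hy)
  have h := hmono ⟨hx₀, hx.2⟩ ⟨one_pos, le_rfl⟩ hx.2
  simp only [eval_one_binomialExcess, Nat.add_sub_cancel_left, Real.one_rpow, div_one] at h
  exact (div_le_iff₀ (Real.rpow_pos_of_pos hx₀ _)).mp h

lemma fLk_eq_eval_binomialExcess {L k : ℕ} (hkL : k < L) (x : ℝ) :
    fLk L k x = (binomialExcess L (L - k)).eval x := by
  obtain ⟨p, rfl⟩ : ∃ p, L = p + 1 + k := ⟨L - k - 1, by lia⟩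
  rw [Nat.add_sub_cancel, binomialExcess_eq_sum, fLk, Nat.add_sub_cancel, eval_finsetSum,
    ← Finset.Ico_add_one_right_eq_Icc, sum_Ico_eq_sum_range, Nat.add_sub_cancel]
  refine sum_congr rfl fun i _ ↦ ?_
  rw [show p + 1 + (1 + i) = p + 2 + i by ring, show p + 2 + i - 2 = p + i by lia,
    Nat.add_sub_cancel_left]
  simp only [eval_smul, eval_mul, eval_natCast, eval_pow, eval_X, smul_eq_mul]
  ring

lemma fLk_nonneg {L k : ℕ} (hkL : k < L) {x : ℝ} (hx : x ∈ Set.Icc 0 1) : 0 ≤ fLk L k x := by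
  rw [fLk_eq_eval_binomialExcess hkL]
  exact eval_binomialExcess_nonneg L (L - k) hx

lemma fLk_le_mul_rpow {L k : ℕ} (hk : 0 < k) (hkL : k < L) {x : ℝ} (hx : x ∈ Set.Icc 0 1) :
    fLk L k x ≤ k * x ^ ((L : ℝ) / k) := by
  rw [fLk_eq_eval_binomialExcess hkL]
  simpa only [Nat.sub_add_cancel hkL.le] using eval_binomialExcess_le hk (L - k) hx

end BinomialExcess

/-- upper bound, Theorem 2.2(i): for `1 ≤ k < L`, `0 ≤ λ ≤ 1`, and
`ū` satisfying `ū_0 = 1`, `ū_{m+1} = (λ/k)·f(ū_m)`, one has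
`ū_m ≤ λ^{((L/k)^m − 1)/(L/k − 1)}` for all `m`. -/
theorem fixedPoint_upper_bound (L k : ℕ) (hk : 1 ≤ k) (hkL : k < L)
    (lam : ℝ) (hlam0 : 0 ≤ lam) (hlam1 : lam ≤ 1)
    (ubar : ℕ → ℝ) (h0 : ubar 0 = 1)
    (hrec : ∀ m : ℕ, ubar (m + 1) = lam / k * fLk L k (ubar m)) (m : ℕ) :
    ubar m ≤ lam ^ ((((L : ℝ) / k) ^ m - 1) / ((L : ℝ) / k - 1)) := by
  have hk₀ : (0 : ℝ) < k := Nat.cast_pos.mpr hk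
  have hratio : 1 < (L : ℝ) / k := (one_lt_div hk₀).mpr (Nat.cast_lt.mpr hkL)
  have hstep {m : ℕ} (hm : ubar m ∈ Set.Icc 0 1) :
      ubar (m + 1) ≤ lam * ubar m ^ ((L : ℝ) / k) := by
    calc ubar (m + 1) = lam / k * fLk L k (ubar m) := hrec m
      _ ≤ lam / k * (k * ubar m ^ ((L : ℝ) / k)) := by
        gcongr
        exact fLk_le_mul_rpow hk hkL hm
      _ = lam * ubar m ^ ((L : ℝ) / k) := by field_simp
  have hunit (m : ℕ) : ubar m ∈ Set.Icc 0 1 := by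
    induction m with
    | zero => simp [h0]
    | succ m ih =>
      refine ⟨hrec m ▸ mul_nonneg (by positivity) (fLk_nonneg hkL ih), (hstep ih).trans ?_⟩
      exact mul_le_one₀ hlam1 (Real.rpow_nonneg ih.1 _)
        (Real.rpow_le_one ih.1 ih.2 (zero_le_one.trans hratio.le))
  rw [← geom_sum_eq hratio.ne']
  exact le_rpow_geom_sum hlam0 (zero_le_one.trans hratio.le) (fun m ↦ (hunit m).1) h0.le
    (fun m ↦ hstep (hunit m)) m
end

section
/- Let 1 ≤ k < L be integers and 0 ≤ λ ≤ 1. If ū satisfies the fixed-point recursion ū_0 = 1 and ū_{m+1} = (λ/k)·f(ū_m), then for all m ≥ 0, ū_m ≥ λ^{((L−k+1)^m − 1)/(L−k)}. -/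
open Finset

/-! Write `d = L - k - 1`. Summing Pascal's rule twice turns the alternating polynomial `f` into
`x ^ (d + 2) * ∑ j < k, ∑ i ≤ j, C(i + d, d) * (1 - x) ^ i`, all of whose terms are nonnegative on
`[0, 1]`. The inner sums lie between their first term `1` and the full negative binomial series
`1 / x ^ (d + 1)`, so `k * x ^ (d + 2) ≤ f x ≤ k`. Hence `ū` stays in `[0, 1]` and satisfies
`ū (m + 1) ≥ λ * ū m ^ (d + 2)`, which iterates to the exponent `∑ i < m, (d + 2) ^ i`. -/

theorem sum_range_choose_succ_mul {R : Type*} [Semiring R] (a : ℕ → R) (m n : ℕ) :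
    ∑ i ∈ range n, ((m + n).choose (m + 1 + i) : R) * a i =
      ∑ j ∈ range n, ∑ i ∈ range (j + 1), ((m + j).choose (m + i) : R) * a i := by
  induction n with
  | zero => simp
  | succ n ih =>
    have pascal (i : ℕ) : ((m + (n + 1)).choose (m + 1 + i) : R) * a i =
        ((m + n).choose (m + 1 + i) : R) * a i + ((m + n).choose (m + i) : R) * a i := by
      rw [← add_assoc, add_right_comm m 1 i, Nat.choose_succ_succ', Nat.cast_add, add_mul, add_comm]
    have last_eq_zero : (m + n).choose (m + 1 + n) = 0 := Nat.choose_eq_zero_of_lt (by lia)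
    rw [sum_congr rfl fun i _ ↦ pascal i, sum_add_distrib, sum_range_succ _ n, last_eq_zero,
      Nat.cast_zero, zero_mul, add_zero, ih, sum_range_succ (fun j ↦ ∑ i ∈ range (j + 1), _) n]

section CommRing

variable {R : Type*} [CommRing R] (x : R) (d n : ℕ)

theorem sum_range_choose_mul_choose_mul_neg_pow :
    ∑ i ∈ range (n + 1), ((d + n).choose (d + i) : R) * (((i + d).choose d : R) * (-x) ^ i) =
      ((n + d).choose d : R) * (1 - x) ^ n := by
  have choose_mul_choose (i : ℕ) :
      (d + n).choose (d + i) * (i + d).choose d = (n + d).choose d * n.choose i := by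
    rw [add_comm i d, add_comm n d, Nat.choose_mul (Nat.le_add_right d i),
      Nat.add_sub_cancel_left, Nat.add_sub_cancel_left]
  rw [sub_eq_neg_add, add_pow, mul_sum]
  refine sum_congr rfl fun i _ ↦ ?_
  rw [← mul_assoc, ← Nat.cast_mul, choose_mul_choose, Nat.cast_mul, one_pow]
  ring

theorem sum_range_choose_succ_mul_choose_mul_neg_pow :
    ∑ i ∈ range n, ((d + n).choose (d + 1 + i) : R) * (((i + d).choose d : R) * (-x) ^ i) =
      ∑ i ∈ range n, ((i + d).choose d : R) * (1 - x) ^ i := by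
  simp_rw [sum_range_choose_succ_mul, sum_range_choose_mul_choose_mul_neg_pow]

end CommRing

theorem fLk_eq_sum_sum (d k : ℕ) (x : ℝ) :
    fLk (d + 1 + k) k x =
      x ^ (d + 2) * ∑ j ∈ range k, ∑ i ∈ range (j + 1), ((i + d).choose d : ℝ) * (1 - x) ^ i := by
  have fLk_eq : fLk (d + 1 + k) k x = x ^ (d + 2) * ∑ i ∈ range k,
      ((d + 1 + k).choose (d + 1 + 1 + i) : ℝ) * (((i + d).choose d : ℝ) * (-x) ^ i) := by
    rw [fLk, ← Ico_add_one_right_eq_Icc, sum_Ico_eq_sum_range, Nat.add_sub_cancel, mul_sum]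
    refine sum_congr rfl fun i _ ↦ ?_
    rw [Nat.add_sub_cancel, Nat.add_sub_cancel_left, ← add_assoc (d + 1) 1 i,
      show d + 1 + 1 + i - 2 = i + d by lia, Nat.choose_symm_add, neg_pow x]
    ring
  rw [fLk_eq, sum_range_choose_succ_mul]
  congr 1
  refine sum_congr rfl fun j _ ↦ ?_
  rw [add_assoc d 1 j, add_comm 1 j, sum_range_choose_succ_mul_choose_mul_neg_pow]

theorem one_le_sum_range_succ_choose_mul_pow {R : Type*} [Semiring R] [PartialOrder R]
    [IsOrderedRing R] {y : R} (hy : 0 ≤ y) (d n : ℕ) :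
    1 ≤ ∑ i ∈ range (n + 1), ((i + d).choose d : R) * y ^ i := by
  calc
    1 = ((0 + d).choose d : R) * y ^ 0 := by simp
    _ ≤ ∑ i ∈ range (n + 1), ((i + d).choose d : R) * y ^ i :=
      single_le_sum (f := fun i ↦ ((i + d).choose d : R) * y ^ i)
        (fun i _ ↦ mul_nonneg (Nat.cast_nonneg _) (pow_nonneg hy i)) (by simp)

theorem pow_mul_sum_range_choose_mul_one_sub_pow_le_one {x : ℝ} (hx0 : 0 ≤ x) (hx1 : x ≤ 1)
    (d n : ℕ) : x ^ (d + 1) * ∑ i ∈ range n, ((i + d).choose d : ℝ) * (1 - x) ^ i ≤ 1 := by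
  rcases hx0.eq_or_lt with rfl | hx_pos
  · simp
  have hy : 0 ≤ 1 - x := sub_nonneg.2 hx1
  have norm_lt_one : ‖1 - x‖ < 1 := by
    rw [Real.norm_of_nonneg hy]
    linarith
  have partial_sum_le : ∑ i ∈ range n, ((i + d).choose d : ℝ) * (1 - x) ^ i ≤
      1 / (1 - (1 - x)) ^ (d + 1) :=
    sum_le_hasSum _ (fun i _ ↦ by positivity)
      (hasSum_choose_mul_geometric_of_norm_lt_one d norm_lt_one)
  rwa [sub_sub_cancel, le_div_iff₀' (by positivity)] at partial_sum_le

theorem mul_pow_le_fLk {x : ℝ} (hx0 : 0 ≤ x) (hx1 : x ≤ 1) (d k : ℕ) :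
    k * x ^ (d + 2) ≤ fLk (d + 1 + k) k x := by
  rw [fLk_eq_sum_sum, mul_comm]
  gcongr
  simpa using card_nsmul_le_sum (range k) _ 1 fun j _ ↦
    one_le_sum_range_succ_choose_mul_pow (sub_nonneg.2 hx1) d j

theorem fLk_le {x : ℝ} (hx0 : 0 ≤ x) (hx1 : x ≤ 1) (d k : ℕ) : fLk (d + 1 + k) k x ≤ k := by
  calc
    fLk (d + 1 + k) k x = x * ∑ j ∈ range k,
        x ^ (d + 1) * ∑ i ∈ range (j + 1), ((i + d).choose d : ℝ) * (1 - x) ^ i := by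
      rw [fLk_eq_sum_sum, ← mul_sum, ← mul_assoc, ← pow_succ']
    _ ≤ x * ∑ _j ∈ range k, 1 := by
      gcongr with j
      exact pow_mul_sum_range_choose_mul_one_sub_pow_le_one hx0 hx1 d (j + 1)
    _ = x * k := by rw [sum_const, card_range, nsmul_one]
    _ ≤ k := mul_le_of_le_one_left k.cast_nonneg hx1

theorem fLk_div_mem_Icc {x : ℝ} (hx : x ∈ Set.Icc 0 1) (d k : ℕ) :
    fLk (d + 1 + k) k x / k ∈ Set.Icc 0 1 := by
  have hk : (0 : ℝ) ≤ k := k.cast_nonneg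
  have fLk_nonneg : 0 ≤ fLk (d + 1 + k) k x :=
    (mul_nonneg hk (pow_nonneg hx.1 _)).trans (mul_pow_le_fLk hx.1 hx.2 d k)
  exact ⟨div_nonneg fLk_nonneg hk, div_le_one_of_le₀ (fLk_le hx.1 hx.2 d k) hk⟩

theorem pow_geom_sum_le_of_mul_pow_le {R : Type*} [CommSemiring R] [PartialOrder R]
    [IsOrderedRing R] {c : R} (hc : 0 ≤ c) {p : ℕ} {u : ℕ → R} (h0 : 1 ≤ u 0)
    (hu : ∀ m, c * u m ^ p ≤ u (m + 1)) (m : ℕ) : c ^ ∑ i ∈ range m, p ^ i ≤ u m := by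
  induction m with
  | zero => simpa using h0
  | succ m ih =>
    calc
      c ^ ∑ i ∈ range (m + 1), p ^ i = c * (c ^ ∑ i ∈ range m, p ^ i) ^ p := by
        rw [geom_sum_succ, pow_succ', mul_comm p, pow_mul]
      _ ≤ c * u m ^ p := by gcongr
      _ ≤ u (m + 1) := hu m

/-- lower bound, Theorem 2.2(ii): for `1 ≤ k < L`, `0 ≤ λ ≤ 1`, and
`ū` satisfying `ū_0 = 1`, `ū_{m+1} = (λ/k)·f(ū_m)`, one has
`ū_m ≥ λ^{((L−k+1)^m − 1)/(L−k)}` for all `m`. -/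
theorem fixedPoint_lower_bound (L k : ℕ) (hk : 1 ≤ k) (hkL : k < L)
    (lam : ℝ) (hlam0 : 0 ≤ lam) (hlam1 : lam ≤ 1)
    (ubar : ℕ → ℝ) (h0 : ubar 0 = 1)
    (hrec : ∀ m : ℕ, ubar (m + 1) = lam / k * fLk L k (ubar m)) (m : ℕ) :
    lam ^ ((((L : ℝ) - k + 1) ^ m - 1) / ((L : ℝ) - k)) ≤ ubar m := by
  obtain ⟨d, rfl⟩ : ∃ d, L = d + 1 + k := ⟨L - k - 1, by lia⟩
  have ubar_succ (n : ℕ) : ubar (n + 1) = lam * (fLk (d + 1 + k) k (ubar n) / k) := by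
    rw [hrec, div_mul_eq_mul_div, mul_div_assoc]
  have ubar_mem_Icc (n : ℕ) : ubar n ∈ Set.Icc 0 1 := by
    induction n with
    | zero => simp [h0]
    | succ n ih => exact ubar_succ n ▸ unitInterval.mul_mem ⟨hlam0, hlam1⟩ (fLk_div_mem_Icc ih d k)
  have mul_pow_le_ubar_succ (n : ℕ) : lam * ubar n ^ (d + 2) ≤ ubar (n + 1) := by
    rw [ubar_succ]
    gcongr
    rw [le_div_iff₀' (Nat.cast_pos.2 hk)]
    exact mul_pow_le_fLk (ubar_mem_Icc n).1 (ubar_mem_Icc n).2 d k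
  have exponent_eq : (((d + 1 + k : ℕ) - k + 1 : ℝ) ^ m - 1) / ((d + 1 + k : ℕ) - k) =
      (∑ i ∈ range m, (d + 2) ^ i : ℕ) := by
    push_cast
    rw [geom_sum_eq (by linarith)]
    ring_nf
  rw [exponent_eq, Real.rpow_natCast]
  exact pow_geom_sum_le_of_mul_pow_le hlam0 h0.ge mul_pow_le_ubar_succ m
end

section
/- Let 1 ≤ k ≤ L be integers. Then for every x ∈ [0,1], f(x) ≥ k·x^{L−k+1}. -/
/-!
If `B` counts the successes among `L` independent trials of success probability `x`, then
`C(L, n) * x ^ n = E[C(B, n)]`. As `(-1) ^ j * C(m + j - 1, j) = C(-m, j)`, with `m = L - k`,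
the Chu–Vandermonde identity `∑ j, C(-m, j) * C(B, m + 1 + j) = C(B - m, B - m - 1)` for `B > m`
(the left side vanishes for `B ≤ m`) gives `f(x) = E[(B - m)⁺]`; the positive part is the truncated
subtraction of `ℕ`. On the event that the first `m` trials all succeed, `B - m` is the number of
successes among the other `k` trials, so the expectation is at least `x ^ m * (k * x)`.
-/

open Finset

theorem choose_le_add_choose_add (m n ν : ℕ) : n.choose ν ≤ (m + n).choose (m + ν) := by
  rw [Nat.add_choose_eq]
  calc n.choose ν = m.choose m * n.choose ν := by rw [Nat.choose_self, one_mul]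
    _ ≤ ∑ ij ∈ antidiagonal (m + ν), m.choose ij.1 * n.choose ij.2 :=
        single_le_sum (f := fun ij : ℕ × ℕ => m.choose ij.1 * n.choose ij.2)
          (fun _ _ => Nat.zero_le _) (a := (m, ν)) (mem_antidiagonal.2 rfl)

section BinomialRing

variable {R : Type*} [Ring R] [BinomialRing R]

-- At `m = j = 0` the truncated `m + j - 1 = 0` still gives the right value `C(0, 0) = 1`.
theorem ring_choose_neg_natCast (m j : ℕ) :
    Ring.choose (-(m : R)) j = (-1) ^ j * ((m + j - 1).choose j : R) := by
  rw [Ring.choose_neg]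
  rcases Nat.eq_zero_or_pos (m + j) with h | h
  · obtain ⟨rfl, rfl⟩ : m = 0 ∧ j = 0 := by omega
    simp
  · have hcast : (m : R) + j - 1 = ((m + j - 1 : ℕ) : R) := by
      rw [Nat.cast_sub h, Nat.cast_add, Nat.cast_one]
    rw [hcast, Ring.choose_natCast, Int.negOnePow_def]
    simp [Units.smul_def]

theorem sum_range_ring_choose_mul_choose (r : R) {b n N : ℕ} (hn : n ≤ b) (hN : b < n + N) :
    ∑ j ∈ range N, Ring.choose r j * (b.choose (n + j) : R) = Ring.choose (r + b) (b - n) := by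
  obtain ⟨d, rfl⟩ := Nat.exists_eq_add_of_le hn
  have hsubset : range (d + 1) ⊆ range N := range_subset_range.2 (by omega)
  rw [Nat.add_sub_cancel_left, Ring.add_choose_eq d (Nat.cast_commute _ r).symm,
    Nat.sum_antidiagonal_eq_sum_range_succ_mk, ← sum_subset hsubset]
  · refine sum_congr rfl fun j hj => ?_
    have hj : j ≤ d := mem_range_succ_iff.1 hj
    rw [Ring.choose_natCast, Nat.choose_symm_of_eq_add (show n + d = (n + j) + (d - j) by omega)]
  · intro j _ hj
    rw [mem_range] at hj
    rw [Nat.choose_eq_zero_of_lt (by omega), Nat.cast_zero, mul_zero]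

theorem sum_range_ring_choose_neg_mul_choose {m b N : ℕ} (hN : b ≤ m + N) :
    ∑ j ∈ range N, Ring.choose (-(m : R)) j * (b.choose (m + 1 + j) : R) = ((b - m : ℕ) : R) := by
  rcases Nat.lt_or_ge m b with hb | hb
  · obtain ⟨d, rfl⟩ := Nat.exists_eq_add_of_lt hb
    rw [sum_range_ring_choose_mul_choose _ (by omega) (by omega),
      show -(m : R) + ((m + d + 1 : ℕ) : R) = ((d + 1 : ℕ) : R) by push_cast; abel,
      show m + d + 1 - (m + 1) = d by omega, show m + d + 1 - m = d + 1 by omega,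
      Ring.choose_natCast, Nat.choose_succ_self_right]
  · rw [Nat.sub_eq_zero_of_le hb, Nat.cast_zero]
    refine sum_eq_zero fun j _ => ?_
    rw [Nat.choose_eq_zero_of_lt (by omega), Nat.cast_zero, mul_zero]

end BinomialRing

section Bernstein

open Polynomial

theorem choose_smul_bernsteinPolynomial_add (R : Type*) [CommRing R] (j n ν : ℕ) :
    (j + ν).choose j • bernsteinPolynomial R (j + n) (j + ν) =
      (j + n).choose j • (X ^ j * bernsteinPolynomial R n ν) := by
  have hchoose : (j + n).choose (j + ν) * (j + ν).choose j = (j + n).choose j * n.choose ν := by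
    rw [Nat.choose_mul (Nat.le_add_right j ν), Nat.add_sub_cancel_left, Nat.add_sub_cancel_left]
  have hcast := congrArg (Nat.cast : ℕ → R[X]) hchoose
  push_cast at hcast
  simp only [bernsteinPolynomial, nsmul_eq_mul, Nat.add_sub_add_left, pow_add]
  linear_combination X ^ j * X ^ ν * (1 - X) ^ (n - ν) * hcast

theorem sum_choose_smul_bernsteinPolynomial (R : Type*) [CommRing R] (n j : ℕ) :
    ∑ ν ∈ range (n + 1), ν.choose j • bernsteinPolynomial R n ν = n.choose j • X ^ j := by
  rcases Nat.lt_or_ge n j with hj | hj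
  · rw [Nat.choose_eq_zero_of_lt hj, zero_smul]
    refine sum_eq_zero fun ν hν => ?_
    rw [Nat.choose_eq_zero_of_lt ((mem_range_succ_iff.1 hν).trans_lt hj), zero_smul]
  · obtain ⟨d, rfl⟩ := Nat.exists_eq_add_of_le hj
    have hlow : ∑ ν ∈ range j, ν.choose j • bernsteinPolynomial R (j + d) ν = 0 :=
      sum_eq_zero fun ν hν => by rw [Nat.choose_eq_zero_of_lt (mem_range.1 hν), zero_smul]
    rw [add_assoc, sum_range_add, hlow, zero_add]
    simp only [choose_smul_bernsteinPolynomial_add]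
    rw [← smul_sum, ← mul_sum, bernsteinPolynomial.sum, mul_one]

variable {R : Type*} [CommRing R] [PartialOrder R] [IsOrderedRing R]

theorem pow_mul_eval_bernsteinPolynomial_le {x : R} (hx : x ∈ Set.Icc (0 : R) 1) (m n ν : ℕ) :
    x ^ m * (bernsteinPolynomial R n ν).eval x ≤
      (bernsteinPolynomial R (m + n) (m + ν)).eval x := by
  have hweight : 0 ≤ x ^ (m + ν) * (1 - x) ^ (n - ν) :=
    mul_nonneg (pow_nonneg hx.1 _) (pow_nonneg (sub_nonneg.2 hx.2) _)
  calc x ^ m * (bernsteinPolynomial R n ν).eval x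
      = n.choose ν * (x ^ (m + ν) * (1 - x) ^ (n - ν)) := by
        simp only [bernsteinPolynomial, eval_mul, eval_pow, eval_natCast, eval_X, eval_sub,
          eval_one]
        ring
    _ ≤ (m + n).choose (m + ν) * (x ^ (m + ν) * (1 - x) ^ (n - ν)) := by
        gcongr
        exact choose_le_add_choose_add m n ν
    _ = (bernsteinPolynomial R (m + n) (m + ν)).eval x := by
        simp [bernsteinPolynomial, Nat.add_sub_add_left, mul_assoc]

theorem natCast_mul_pow_le_sum_tsub_mul_eval_bernsteinPolynomial {x : R}
    (hx : x ∈ Set.Icc (0 : R) 1) (m n : ℕ) :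
    n * x ^ (m + 1) ≤
      ∑ ν ∈ range (m + n + 1), ((ν - m : ℕ) : R) * (bernsteinPolynomial R (m + n) ν).eval x := by
  have hmean : ∑ ν ∈ range (n + 1), (ν : R) * (bernsteinPolynomial R n ν).eval x = n * x := by
    simpa [eval_finsetSum] using congrArg (eval x) (bernsteinPolynomial.sum_smul R n)
  have hlow : ∑ ν ∈ range m,
      ((ν - m : ℕ) : R) * (bernsteinPolynomial R (m + n) ν).eval x = 0 :=
    sum_eq_zero fun ν hν => by
      rw [Nat.sub_eq_zero_of_le (mem_range.1 hν).le, Nat.cast_zero, zero_mul]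
  calc n * x ^ (m + 1)
      = ∑ ν ∈ range (n + 1), (ν : R) * (x ^ m * (bernsteinPolynomial R n ν).eval x) := by
        simp only [mul_left_comm _ (x ^ m), ← mul_sum, hmean]
        ring
    _ ≤ ∑ ν ∈ range (n + 1),
          (ν : R) * (bernsteinPolynomial R (m + n) (m + ν)).eval x := by
        gcongr with ν
        exact pow_mul_eval_bernsteinPolynomial_le hx m n ν
    _ = ∑ ν ∈ range (m + n + 1),
          ((ν - m : ℕ) : R) * (bernsteinPolynomial R (m + n) ν).eval x := by
        rw [add_assoc m n 1, sum_range_add _ m, hlow, zero_add]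
        simp only [Nat.add_sub_cancel_left]

end Bernstein

theorem fLk_eq_sum_range_ring_choose (m k : ℕ) (x : ℝ) :
    fLk (m + k) k x = ∑ j ∈ range k,
      Ring.choose (-(m : ℝ)) j * ((m + k).choose (m + 1 + j) * x ^ (m + 1 + j)) := by
  rw [fLk, Nat.add_sub_cancel, ← Ico_add_one_right_eq_Icc, sum_Ico_eq_sum_range,
    Nat.add_sub_cancel]
  refine sum_congr rfl fun j _ => ?_
  rw [ring_choose_neg_natCast, Nat.add_sub_cancel_left, ← add_assoc,
    show m + 1 + j - 2 = m + j - 1 by omega]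
  ring

theorem fLk_eq_sum_tsub_mul_eval_bernsteinPolynomial (m k : ℕ) (x : ℝ) :
    fLk (m + k) k x = ∑ ν ∈ range (m + k + 1),
      ((ν - m : ℕ) : ℝ) * (bernsteinPolynomial ℝ (m + k) ν).eval x := by
  have hmoment (n : ℕ) : ((m + k).choose n : ℝ) * x ^ n =
      ∑ ν ∈ range (m + k + 1), (ν.choose n : ℝ) * (bernsteinPolynomial ℝ (m + k) ν).eval x := by
    simpa [Polynomial.eval_finsetSum] using
      congrArg (Polynomial.eval x) (sum_choose_smul_bernsteinPolynomial ℝ (m + k) n).symm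
  simp only [fLk_eq_sum_range_ring_choose, hmoment, mul_sum, ← mul_assoc]
  rw [sum_comm]
  refine sum_congr rfl fun ν hν => ?_
  rw [← sum_mul, sum_range_ring_choose_neg_mul_choose (mem_range_succ_iff.1 hν)]

/-- for `1 ≤ k ≤ L` and every `x ∈ [0,1]`, `f(x) ≥ k·x^{L−k+1}`. -/
theorem f_ge_pow (L k : ℕ) (hk : 1 ≤ k) (hkL : k ≤ L)
    (x : ℝ) (hx : x ∈ Set.Icc (0 : ℝ) 1) :
    (k : ℝ) * x ^ (L - k + 1) ≤ fLk L k x := by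
  obtain ⟨m, rfl⟩ := Nat.exists_eq_add_of_le' hkL
  rw [Nat.add_sub_cancel, fLk_eq_sum_tsub_mul_eval_bernsteinPolynomial]
  exact natCast_mul_pow_le_sum_tsub_mul_eval_bernsteinPolynomial hx m k
end

section
/- Let 1 ≤ k ≤ L be integers and define w(x) = x·f'(x) − (L−k+1)·f(x), where f' is the derivative of f. Then w(x) ≤ 0 for all x ∈ [0,1]. -/
open Finset

/-!
Write `m = L - k` and `K = k - 1`. The operator `x d/dx - (m + 1)` multiplies `x ^ (m + 1 + j)` by
`j`, and absorbing this factor into the binomial coefficient gives `w(x) = -m x ^ (m + 2) S(-x)`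
with `S(y) = ∑_{t < K} C(m + K + 1, m + t + 2) C(m + t, m) y ^ t`.
To see that `S(-x) ≥ 0` for `x ≤ 1`, expand the first binomial coefficient by the hockey-stick
identity twice. The innermost sums become
`∑_{t ≤ u} C(m + u, m + t) C(m + t, m) y ^ t = C(m + u, m) (1 + y) ^ u`,
so `S` is a combination of powers of `1 + y` with nonnegative coefficients.
-/

section Binomial

variable {R : Type*}

lemma sum_range_choose_add_succ_mul [NonAssocSemiring R] (m K : ℕ) (c : ℕ → R) :
    ∑ t ∈ range K, ((m + K).choose (m + t + 1) : R) * c t =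
      ∑ s ∈ range K, ∑ t ∈ range (s + 1), ((m + s).choose (m + t) : R) * c t := by
  induction K with
  | zero => simp
  | succ K ih =>
    have pascal (t : ℕ) : ((m + (K + 1)).choose (m + t + 1) : R) * c t =
        ((m + K).choose (m + t + 1) : R) * c t + ((m + K).choose (m + t) : R) * c t := by
      rw [← add_assoc m K 1, Nat.choose_succ_succ, Nat.cast_add, add_comm, add_mul]
    have top_eq_zero : ((m + K).choose (m + K + 1) : R) * c K = 0 := by
      rw [Nat.choose_succ_self, Nat.cast_zero, zero_mul]
    calc
      _ = ∑ t ∈ range (K + 1), ((m + K).choose (m + t + 1) : R) * c t +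
          ∑ t ∈ range (K + 1), ((m + K).choose (m + t) : R) * c t := by
        rw [← sum_add_distrib]
        exact sum_congr rfl fun t _ ↦ pascal t
      _ = ∑ t ∈ range K, ((m + K).choose (m + t + 1) : R) * c t +
          ∑ t ∈ range (K + 1), ((m + K).choose (m + t) : R) * c t := by
        rw [sum_range_succ, top_eq_zero, add_zero]
      _ = _ := by rw [ih, ← sum_range_succ]

lemma sum_range_choose_add_mul_choose_mul_pow [Semiring R] (m n : ℕ) (y : R) :
    ∑ t ∈ range (n + 1), ((m + n).choose (m + t) : R) * (((m + t).choose m : R) * y ^ t) =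
      ((m + n).choose m : R) * (y + 1) ^ n := by
  rw [(Commute.one_right y).add_pow, mul_sum]
  refine sum_congr rfl fun t _ ↦ ?_
  have trinomial_revision : (m + n).choose (m + t) * (m + t).choose m =
      (m + n).choose m * n.choose t := by
    rw [Nat.choose_mul (Nat.le_add_right m t), Nat.add_sub_cancel_left, Nat.add_sub_cancel_left]
  rw [one_pow, mul_one, ← mul_assoc, ← Nat.cast_mul, trinomial_revision, Nat.cast_mul, mul_assoc,
    Nat.cast_comm (n.choose t)]

lemma sum_range_choose_add_two_mul_choose_mul_pow [Semiring R] (m K : ℕ) (y : R) :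
    ∑ t ∈ range K, ((m + K + 1).choose (m + t + 2) : R) * (((m + t).choose m : R) * y ^ t) =
      ∑ s ∈ range K, ∑ u ∈ range (s + 1), ((m + u).choose m : R) * (y + 1) ^ u := by
  have outer := sum_range_choose_add_succ_mul (m + 1) K fun t ↦ ((m + t).choose m : R) * y ^ t
  have inner (s : ℕ) :=
    sum_range_choose_add_succ_mul m (s + 1) fun t ↦ ((m + t).choose m : R) * y ^ t
  simp only [add_right_comm m 1] at outer
  simp only [sum_range_choose_add_mul_choose_mul_pow] at inner
  exact outer.trans (sum_congr rfl fun s _ ↦ inner s)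

lemma sum_range_choose_add_two_mul_choose_mul_pow_nonneg [Semiring R] [PartialOrder R]
    [IsOrderedRing R] (m K : ℕ) {y : R} (hy : 0 ≤ y + 1) :
    0 ≤ ∑ t ∈ range K, ((m + K + 1).choose (m + t + 2) : R) *
      (((m + t).choose m : R) * y ^ t) := by
  rw [sum_range_choose_add_two_mul_choose_mul_pow]
  positivity

end Binomial

lemma mul_deriv_sum_mul_pow_sub {ι 𝕜 : Type*} [NontriviallyNormedField 𝕜] (s : Finset ι)
    (a : ι → 𝕜) (e : ι → ℕ) (c x : 𝕜) :
    x * deriv (fun z ↦ ∑ i ∈ s, a i * z ^ e i) x - c * ∑ i ∈ s, a i * x ^ e i =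
      ∑ i ∈ s, (e i - c) * (a i * x ^ e i) := by
  have hderiv : deriv (fun z ↦ ∑ i ∈ s, a i * z ^ e i) x =
      ∑ i ∈ s, a i * (e i * x ^ (e i - 1)) :=
    (HasDerivAt.fun_sum fun i _ ↦ (hasDerivAt_pow (e i) x).const_mul (a i)).deriv
  have mul_pow_pred (n : ℕ) : x * (n * x ^ (n - 1)) = n * x ^ n := by
    cases n with
    | zero => simp
    | succ n => rw [Nat.add_sub_cancel]; ring
  rw [hderiv, mul_sum, mul_sum, ← sum_sub_distrib]
  exact sum_congr rfl fun i _ ↦ by linear_combination a i * mul_pow_pred (e i)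

lemma succ_mul_add_choose_succ (m t : ℕ) :
    (t + 1) * (m + t).choose (t + 1) = m * (m + t).choose m := by
  rw [mul_comm, Nat.choose_succ_right_eq, Nat.add_sub_cancel, ← Nat.choose_symm_add, mul_comm]

lemma mul_deriv_fLk_sub_mul_fLk (m K : ℕ) (x : ℝ) :
    x * deriv (fLk (m + K + 1) (K + 1)) x - (m + 1) * fLk (m + K + 1) (K + 1) x =
      -(m * x ^ (m + 2) * ∑ t ∈ range K,
        ((m + K + 1).choose (m + t + 2) : ℝ) * (((m + t).choose m : ℝ) * (-x) ^ t)) := by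
  have hsub : m + K + 1 - (K + 1) = m := by lia
  unfold fLk
  rw [hsub, mul_deriv_sum_mul_pow_sub, ← Ico_add_one_right_eq_Icc, sum_Ico_eq_sum_range,
    Nat.add_sub_cancel, sum_range_succ', mul_sum, ← sum_neg_distrib]
  -- For `m = 0`, truncation turns `C(-1, 0)` into `C(0, 0)`, but only in this vanishing term.
  have first_term_eq_zero : ((m + (1 + 0) : ℕ) : ℝ) - (m + 1) = 0 := by push_cast; ring
  rw [first_term_eq_zero, zero_mul, add_zero]
  refine sum_congr rfl fun t _ ↦ ?_
  have absorption : (t + 1 : ℝ) * (m + t).choose (t + 1) = m * (m + t).choose m :=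
    mod_cast succ_mul_add_choose_succ m t
  have hexp : m + (1 + (t + 1)) = m + t + 2 := by ring
  rw [hexp, Nat.add_sub_cancel, Nat.add_sub_cancel_left, neg_pow x t]
  push_cast
  linear_combination
    ((m + K + 1).choose (m + t + 2) : ℝ) * (-1) ^ (t + 1) * x ^ (m + t + 2) * absorption

/-- for `1 ≤ k ≤ L`, the function `w(x) = x·f'(x) − (L−k+1)·f(x)`
satisfies `w(x) ≤ 0` for all `x ∈ [0,1]`. -/
theorem w_nonpos (L k : ℕ) (hk : 1 ≤ k) (hkL : k ≤ L)
    (x : ℝ) (hx : x ∈ Set.Icc (0 : ℝ) 1) :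
    x * deriv (fLk L k) x - ((L : ℝ) - k + 1) * fLk L k x ≤ 0 := by
  obtain ⟨hx0, hx1⟩ := hx
  obtain ⟨K, rfl⟩ := Nat.exists_eq_add_of_le' hk
  obtain ⟨m, rfl⟩ := Nat.exists_eq_add_of_le' hkL
  have hcoef : ((m + (K + 1) : ℕ) : ℝ) - (K + 1 : ℕ) + 1 = m + 1 := by push_cast; ring
  rw [hcoef, ← add_assoc, mul_deriv_fLk_sub_mul_fLk, neg_nonpos]
  have hsum := sum_range_choose_add_two_mul_choose_mul_pow_nonneg m K (y := -x) (by linarith)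
  positivity
end

section
/- Let 1 ≤ k ≤ L be integers, λ > 0, K ∈ ℕ, c ≥ 0, and let s be a solution of the truncated system on coordinates 1,…,K with s_{K+1}(t) = c for all t ≥ 0. If the initial conditions satisfy 1 = s_0(0) ≥ s_1(0) ≥ … ≥ s_K(0) ≥ s_{K+1}(0) = c, then for all t ≥ 0, 1 = s_0(t) ≥ s_1(t) ≥ … ≥ s_K(t) ≥ s_{K+1}(t) = c. -/
open Finset Set

/-- A solution of the truncated system \eqref{eqn:truncSys}-\eqref{eqn:truncInit}
on coordinates `1,…,K` with boundary value `c` at coordinate `K+1`. -/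
def IsTruncSol (L k : ℕ) (lam : ℝ) (K : ℕ) (c : ℝ) (s : ℝ → ℕ → ℝ) : Prop :=
  (∀ t ∈ Set.Ici (0 : ℝ), s t 0 = 1) ∧
  (∀ t ∈ Set.Ici (0 : ℝ), s t (K + 1) = c) ∧
  (∀ j, 1 ≤ j → j ≤ K → ∀ t ∈ Set.Ici (0 : ℝ),
    HasDerivWithinAt (fun τ => s τ j)
      (lam * (fLk L k (s t (j - 1)) - fLk L k (s t j)) - k * (s t j - s t (j + 1)))
      (Set.Ici (0 : ℝ)) t)

/-!
Write `d_j = s_j - s_{j+1}`. On `[0, 1]` the polynomial `f` is increasing: if `k < L`, then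
`f''(x)` is a positive multiple of `x^(L-k-1) (1-x)^(k-1)` and `f'(0) = 0`; if `k = L`, then
`f(x) = L x`. If all `d_i` are at least `-m` and `d_j = -m`, every `s_i` lies within `(K+1) m` of
`[c, 1]`, where `f` is increasing up to an error linear in `m` because it is locally Lipschitz;
hence `d_j' ≥ -C m`. So no `d_j` can be the first to cross the barrier `-ε exp((C+1) t)`, and
letting `ε → 0` gives `d_j ≥ 0`.
-/

open scoped Topology NNReal

section DifferentialInequalities

variable {ι : Type*} [Finite ι] {u u' : ℝ → ι → ℝ} {a b : ℝ}

theorem nonneg_of_deriv_pos_of_eq_zero (hcont : ContinuousOn u (Icc a b))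
    (hderiv : ∀ t ∈ Ico a b, HasDerivWithinAt u (u' t) (Ici t) t) (ha : 0 ≤ u a)
    (hpos : ∀ t ∈ Ico a b, 0 ≤ u t → ∀ j, u t j = 0 → 0 < u' t j) :
    ∀ t ∈ Icc a b, 0 ≤ u t := by
  have := Fintype.ofFinite ι
  have hclosed : IsClosed ({t | 0 ≤ u t} ∩ Icc a b) := by
    rw [inter_comm]
    exact hcont.preimage_isClosed_of_isClosed isClosed_Icc isClosed_Ici
  refine hclosed.Icc_subset_of_forall_mem_nhdsWithin ha fun t ⟨hut, ht⟩ ↦ ?_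
  suffices h : ∀ j, ∀ᶠ z in 𝓝[>] t, 0 ≤ u z j by
    exact Filter.eventually_all.2 h
  intro j
  have hj : HasDerivWithinAt (fun z ↦ u z j) (u' t j) (Ioi t) t :=
    (hasDerivWithinAt_pi.1 (hderiv t ht) j).mono Ioi_subset_Ici_self
  rcases (hut j).lt_or_eq with hlt | heq
  · exact (hj.continuousWithinAt.eventually (lt_mem_nhds hlt)).mono fun _ ↦ le_of_lt
  · have hslope := (hasDerivWithinAt_iff_tendsto_slope' self_notMem_Ioi).1 hj
    filter_upwards [hslope.eventually (lt_mem_nhds (hpos t ht hut j heq.symm)),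
      self_mem_nhdsWithin] with z hz hzt
    rw [slope_def_field, ← heq, Pi.zero_apply, sub_zero] at hz
    exact ((div_pos_iff_of_pos_right (sub_pos.2 hzt)).1 hz).le

theorem neg_le_of_neg_mul_le_deriv {C δ : ℝ} (hC : 0 ≤ C) (hδ : 0 < δ)
    (hcont : ContinuousOn u (Icc a b))
    (hderiv : ∀ t ∈ Ico a b, HasDerivWithinAt u (u' t) (Ici t) t) (ha : 0 ≤ u a)
    (hbound : ∀ t ∈ Ico a b, ∀ m ∈ Ioc 0 δ, (∀ i, -m ≤ u t i) → ∀ j, u t j = -m →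
      -(C * m) ≤ u' t j) :
    ∀ t ∈ Icc a b, ∀ j, -δ ≤ u t j := by
  have := Fintype.ofFinite ι
  set m : ℝ → ℝ := fun t ↦ δ * Real.exp ((C + 1) * (t - b)) with hm
  have hm_pos (t : ℝ) : 0 < m t := mul_pos hδ (Real.exp_pos _)
  have hm_le {t : ℝ} (ht : t ≤ b) : m t ≤ δ :=
    mul_le_of_le_one_right hδ.le <| Real.exp_le_one_iff.2 <|
      mul_nonpos_of_nonneg_of_nonpos (by linarith) (sub_nonpos.2 ht)
  have hm_deriv (t : ℝ) : HasDerivAt m ((C + 1) * m t) t := by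
    have h := (((hasDerivAt_id' t).sub_const b).const_mul (C + 1)).exp.const_mul δ
    exact h.congr_deriv (by rw [hm]; ring)
  have barrier : ∀ t ∈ Icc a b, 0 ≤ fun j ↦ u t j + m t := by
    refine nonneg_of_deriv_pos_of_eq_zero (u' := fun t j ↦ u' t j + (C + 1) * m t) ?_ ?_ ?_ ?_
    · exact continuousOn_pi.2 fun j ↦ (continuousOn_pi.1 hcont j).add
        fun t _ ↦ (hm_deriv t).continuousAt.continuousWithinAt
    · exact fun t ht ↦ hasDerivWithinAt_pi.2 fun j ↦
        (hasDerivWithinAt_pi.1 (hderiv t ht) j).add (hm_deriv t).hasDerivWithinAt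
    · exact fun j ↦ add_nonneg (ha j) (hm_pos a).le
    · intro t ht hut j hj
      have hu' := hbound t ht (m t) ⟨hm_pos t, hm_le ht.2.le⟩
        (fun i ↦ neg_le_iff_add_nonneg.2 (hut i)) j (eq_neg_of_add_eq_zero_left hj)
      linarith [hm_pos t]
  exact fun t ht j ↦ (neg_le_neg (hm_le ht.2)).trans (neg_le_iff_add_nonneg.2 (barrier t ht j))

theorem nonneg_of_neg_mul_le_deriv {C δ : ℝ} (hC : 0 ≤ C) (hδ : 0 < δ)
    (hcont : ContinuousOn u (Icc a b))
    (hderiv : ∀ t ∈ Ico a b, HasDerivWithinAt u (u' t) (Ici t) t) (ha : 0 ≤ u a)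
    (hbound : ∀ t ∈ Ico a b, ∀ m ∈ Ioc 0 δ, (∀ i, -m ≤ u t i) → ∀ j, u t j = -m →
      -(C * m) ≤ u' t j) :
    ∀ t ∈ Icc a b, 0 ≤ u t := by
  intro t ht j
  refine le_of_forall_pos_le_add fun ε hε ↦ ?_
  have hmin : -min ε δ ≤ u t j :=
    neg_le_of_neg_mul_le_deriv hC (lt_min hε hδ) hcont hderiv ha
      (fun t ht m hm ↦ hbound t ht m ⟨hm.1, hm.2.trans (min_le_right ε δ)⟩) t ht j
  exact neg_le_iff_add_nonneg.1 ((neg_le_neg (min_le_left ε δ)).trans hmin)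

end DifferentialInequalities

section Chain

variable {g : ℝ → ℝ} {κ b c : ℝ} {n : ℕ}

lemma abs_sub_projIcc_le {r z : ℝ} (hcb : c ≤ b) (hr : 0 ≤ r) (hz : z ∈ Icc (c - r) (b + r)) :
    |z - projIcc c b hcb z| ≤ r := by
  obtain ⟨hz₁, hz₂⟩ := hz
  rw [coe_projIcc, abs_le]
  rcases max_cases c (min b z) with h | h <;> rcases min_cases b z with h' | h' <;>
    constructor <;> linarith

theorem le_add_of_monotoneOn_of_lipschitzOnWith {Λ : ℝ≥0} {r x y : ℝ} (hcb : c ≤ b)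
    (hmono : MonotoneOn g (Icc c b)) (hlip : LipschitzOnWith Λ g (Icc (c - r) (b + r)))
    (hr : 0 ≤ r) (hx : x ∈ Icc (c - r) (b + r)) (hy : y ∈ Icc (c - r) (b + r))
    (hxy : x ≤ y + r) : g x ≤ g y + 3 * (Λ * r) := by
  set p : ℝ → ℝ := fun z ↦ projIcc c b hcb z
  have hp (z : ℝ) : p z ∈ Icc c b := (projIcc c b hcb z).2
  have hsub : Icc c b ⊆ Icc (c - r) (b + r) := Icc_subset_Icc (by linarith) (by linarith)
  have hlip' {v w : ℝ} {ρ : ℝ} (hv : v ∈ Icc (c - r) (b + r)) (hw : w ∈ Icc (c - r) (b + r))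
      (hvw : |v - w| ≤ ρ) : |g v - g w| ≤ Λ * ρ :=
    (hlip.dist_le_mul v hv w hw).trans (mul_le_mul_of_nonneg_left hvw Λ.2)
  have hmin : min x y ∈ Icc (c - r) (b + r) := ⟨le_min hx.1 hy.1, (min_le_left x y).trans hx.2⟩
  have hx_min : |x - min x y| ≤ r := by
    rw [abs_of_nonneg (sub_nonneg.2 (min_le_left x y))]
    rcases min_cases x y with h | h <;> linarith
  calc g x ≤ g (min x y) + Λ * r := by linarith [le_of_abs_le (hlip' hx hmin hx_min)]
    _ ≤ g (p (min x y)) + 2 * (Λ * r) := by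
      linarith [le_of_abs_le (hlip' hmin (hsub (hp _)) (abs_sub_projIcc_le hcb hr hmin))]
    _ ≤ g (p y) + 2 * (Λ * r) := by
      gcongr
      exact hmono (hp _) (hp _) (monotone_projIcc hcb (min_le_right x y))
    _ ≤ g y + 3 * (Λ * r) := by
      linarith [neg_le_of_abs_le (hlip' hy (hsub (hp y)) (abs_sub_projIcc_le hcb hr hy))]

lemma le_add_mul_of_forall_succ_le_add {x : ℕ → ℝ} {m : ℝ} (h : ∀ j < n, x (j + 1) ≤ x j + m)
    {i j : ℕ} (hij : i ≤ j) (hj : j ≤ n) : x j ≤ x i + (j - i) * m := by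
  induction j, hij using Nat.le_induction with
  | base => simp
  | succ j _ ih =>
    push_cast
    linarith [ih (by omega), h j hj]

lemma mem_Icc_of_forall_succ_le_add {x : ℕ → ℝ} {m : ℝ} (hm : 0 ≤ m)
    (h : ∀ j < n, x (j + 1) ≤ x j + m) {j : ℕ} (hj : j ≤ n) :
    x j ∈ Icc (x n - n * m) (x 0 + n * m) := by
  have hjn : (j : ℝ) * m ≤ n * m := by gcongr
  have hj0 : 0 ≤ (j : ℝ) * m := by positivity
  have hleft := le_add_mul_of_forall_succ_le_add h (Nat.zero_le j) hj
  have hright := le_add_mul_of_forall_succ_le_add h hj le_rfl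
  push_cast at hleft
  constructor <;> linarith

/-- The velocity field of a chain of sites `0, …, n` in state `x`: a transport term
`g (x_{j-1}) - g (x_j)` and a linear loss `κ (x_j - x_{j+1})` at the interior sites, and zero at
the two end sites, which are held fixed. -/
noncomputable def chainVelocity (g : ℝ → ℝ) (κ : ℝ) (n : ℕ) (x : ℕ → ℝ) (j : ℕ) : ℝ :=
  if 0 < j ∧ j < n then g (x (j - 1)) - g (x j) - κ * (x j - x (j + 1)) else 0

theorem neg_mul_le_chainVelocity_sub {Λ : ℝ≥0} {x : ℕ → ℝ} {m : ℝ} (hκ : 0 ≤ κ)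
    (hx : x n ≤ x 0) (hmono : MonotoneOn g (Icc (x n) (x 0)))
    (hlip : LipschitzOnWith Λ g (Icc (x n - n * m) (x 0 + n * m))) (hm : 0 ≤ m)
    (hgap : ∀ i < n, -m ≤ x i - x (i + 1)) {j : ℕ} (hj : j < n) (hjm : x j - x (j + 1) = -m) :
    -((6 * Λ * n + κ) * m) ≤ chainVelocity g κ n x j - chainVelocity g κ n x (j + 1) := by
  have hstep : ∀ i < n, x (i + 1) ≤ x i + m := fun i hi ↦ by linarith [hgap i hi]
  have hmn : m ≤ n * m := le_mul_of_one_le_left hm (by exact_mod_cast Nat.one_le_of_lt hj)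
  have hg {i l : ℕ} (hi : i ≤ n) (hl : l ≤ n) (hil : x i ≤ x l + m) :
      g (x i) ≤ g (x l) + 3 * (Λ * (n * m)) :=
    le_add_of_monotoneOn_of_lipschitzOnWith hx hmono hlip (hm.trans hmn)
      (mem_Icc_of_forall_succ_le_add hm hstep hi) (mem_Icc_of_forall_succ_le_add hm hstep hl)
      (by linarith)
  have hΛ : 0 ≤ Λ * (n * m) := by positivity
  have hκm : 0 ≤ κ * m := mul_nonneg hκ hm
  have hlower : -(3 * (Λ * (n * m))) ≤ chainVelocity g κ n x j := by
    unfold chainVelocity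
    split_ifs with h
    · have hprev := hstep (j - 1) (by omega)
      rw [Nat.sub_add_cancel h.1] at hprev
      rw [hjm]
      linarith [hg hj.le (by omega) hprev]
    · linarith
  have hupper : chainVelocity g κ n x (j + 1) ≤ 3 * (Λ * (n * m)) + κ * m := by
    unfold chainVelocity
    split_ifs with h
    · rw [Nat.add_sub_cancel]
      linarith [hg hj.le hj (by linarith), mul_le_mul_of_nonneg_left (hgap (j + 1) h.2) hκ]
    · linarith
  linarith

/-- `s` solves `s_j' = g (s_{j-1}) - g (s_j) - κ (s_j - s_{j+1})` for `0 < j < n` on `[0, ∞)`, with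
the end sites held at `s_0 = b` and `s_n = c`. -/
structure IsChainSol (g : ℝ → ℝ) (κ : ℝ) (n : ℕ) (b c : ℝ) (s : ℝ → ℕ → ℝ) : Prop where
  left_eq : ∀ t ∈ Ici (0 : ℝ), s t 0 = b
  right_eq : ∀ t ∈ Ici (0 : ℝ), s t n = c
  hasDerivWithinAt : ∀ j, 0 < j → j < n → ∀ t ∈ Ici (0 : ℝ),
    HasDerivWithinAt (fun τ ↦ s τ j) (g (s t (j - 1)) - g (s t j) - κ * (s t j - s t (j + 1)))
      (Ici 0) t

namespace IsChainSol

variable {s : ℝ → ℕ → ℝ}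

lemma hasDerivWithinAt_chainVelocity (hs : IsChainSol g κ n b c s) {j : ℕ} (hj : j ≤ n) {t : ℝ}
    (ht : t ∈ Ici (0 : ℝ)) :
    HasDerivWithinAt (fun τ ↦ s τ j) (chainVelocity g κ n (s t) j) (Ici 0) t := by
  unfold chainVelocity
  split_ifs with h
  · exact hs.hasDerivWithinAt j h.1 h.2 t ht
  · obtain rfl | rfl : j = 0 ∨ j = n := by omega
    · exact (hasDerivWithinAt_const t _ b).congr hs.left_eq (hs.left_eq t ht)
    · exact (hasDerivWithinAt_const t _ c).congr hs.right_eq (hs.right_eq t ht)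

theorem succ_le (hs : IsChainSol g κ n b c s) (hκ : 0 ≤ κ) (hlip : LocallyLipschitz g)
    (hmono : MonotoneOn g (Icc c b)) (hinit : ∀ j < n, s 0 (j + 1) ≤ s 0 j) :
    ∀ t ∈ Ici (0 : ℝ), ∀ j < n, s t (j + 1) ≤ s t j := by
  intro T hT j hj
  have hn : 0 < n := by omega
  have hcb : c ≤ b := by
    have h := (mem_Icc_of_forall_succ_le_add le_rfl (m := 0) (by simpa using hinit) hn.le).1
    simpa [hs.left_eq 0 self_mem_Ici, hs.right_eq 0 self_mem_Ici] using h
  obtain ⟨Λ, hΛ⟩ := (hlip.locallyLipschitzOn (s := Icc (c - 1) (b + 1))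
    ).exists_lipschitzOnWith_of_compact isCompact_Icc
  have hderiv (t : ℝ) (ht : 0 ≤ t) : HasDerivWithinAt (fun τ (i : Fin n) ↦ s τ i - s τ (i + 1))
      (fun i ↦ chainVelocity g κ n (s t) i - chainVelocity g κ n (s t) (i + 1)) (Ici 0) t :=
    hasDerivWithinAt_pi.2 fun i ↦ (hs.hasDerivWithinAt_chainVelocity i.2.le ht).sub
      (hs.hasDerivWithinAt_chainVelocity i.2 ht)
  have hgaps := nonneg_of_neg_mul_le_deriv (C := 6 * Λ * n + κ) (δ := 1 / n) (by positivity)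
    (by positivity) (fun t ht ↦ (hderiv t ht.1).continuousWithinAt.mono Icc_subset_Ici_self)
    (fun t ht ↦ (hderiv t ht.1).mono (Ici_subset_Ici.2 ht.1))
    (fun i ↦ sub_nonneg.2 (hinit i i.2)) ?_ T ⟨hT, le_rfl⟩ ⟨j, hj⟩
  · exact sub_nonneg.1 hgaps
  intro t ht m hm hgap i hi
  have hnm : n * m ≤ 1 := by
    have := hm.2
    rwa [le_div_iff₀' (by positivity)] at this
  rw [← hs.left_eq t ht.1, ← hs.right_eq t ht.1] at hcb hmono hΛ
  exact neg_mul_le_chainVelocity_sub hκ hcb hmono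
    (hΛ.mono (Icc_subset_Icc (by linarith) (by linarith))) hm.1.le
    (fun l hl ↦ hgap ⟨l, hl⟩) i.2 hi

end IsChainSol

end Chain

theorem monotoneOn_Icc_of_deriv2_nonneg {f f' f'' : ℝ → ℝ} {a b : ℝ}
    (hf : ∀ x ∈ Icc a b, HasDerivWithinAt f (f' x) (Icc a b) x)
    (hf' : ∀ x ∈ Icc a b, HasDerivWithinAt f' (f'' x) (Icc a b) x) (ha : 0 ≤ f' a)
    (hf'' : ∀ x ∈ Ioo a b, 0 ≤ f'' x) : MonotoneOn f (Icc a b) := by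
  have hmono {h h' : ℝ → ℝ} (hh : ∀ x ∈ Icc a b, HasDerivWithinAt h (h' x) (Icc a b) x)
      (hh' : ∀ x ∈ Ioo a b, 0 ≤ h' x) : MonotoneOn h (Icc a b) :=
    monotoneOn_of_hasDerivWithinAt_nonneg (convex_Icc a b)
      (fun x hx ↦ (hh x hx).continuousWithinAt)
      (fun x hx ↦ (hh x (interior_subset hx)).mono interior_subset)
      (by simpa only [interior_Icc] using hh')
  refine hmono hf fun x ⟨hax, hxb⟩ ↦ ha.trans ?_
  exact hmono hf' hf'' (left_mem_Icc.2 (hax.trans hxb).le) ⟨hax.le, hxb.le⟩ hax.le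

lemma hasDerivAt_sum_div_mul_pow_succ {ι : Type*} (S : Finset ι) (a : ι → ℝ) (p : ι → ℕ) (x : ℝ) :
    HasDerivAt (fun x : ℝ ↦ ∑ i ∈ S, a i / (p i + 1 : ℕ) * x ^ (p i + 1))
      (∑ i ∈ S, a i * x ^ p i) x := by
  refine HasDerivAt.fun_sum fun i _ ↦ ?_
  refine ((hasDerivAt_pow (p i + 1) x).const_mul (a i / (p i + 1 : ℕ))).congr_deriv ?_
  rw [Nat.add_sub_cancel]
  field_simp

lemma sum_neg_one_pow_mul_choose_mul_pow (e q : ℕ) (x : ℝ) :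
    ∑ i ∈ Finset.range (q + 1), (-1) ^ i * (q.choose i : ℝ) * x ^ (e + i) =
      x ^ e * (1 - x) ^ q := by
  rw [show 1 - x = -x + 1 by ring, add_pow, Finset.mul_sum]
  refine Finset.sum_congr rfl fun i _ ↦ ?_
  rw [neg_pow x, pow_add, one_pow]
  ring

lemma choose_mul_choose_mul_succ_mul_succ (e q i : ℕ) :
    (e + q + 2).choose (e + i + 2) * (e + i).choose i * ((e + i + 2) * (e + i + 1)) =
      (e + q + 2) * (e + q + 1) * (e + q).choose e * q.choose i := by
  have habsorb₁ := Nat.add_one_mul_choose_eq (e + q + 1) (e + i + 1)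
  have habsorb₂ := Nat.add_one_mul_choose_eq (e + q) (e + i)
  have htrinomial : (e + q).choose (e + i) * (e + i).choose i = (e + q).choose e * q.choose i := by
    have h := Nat.choose_mul (n := e + q) (Nat.le_add_right e i)
    rwa [Nat.add_sub_cancel_left, Nat.add_sub_cancel_left, Nat.choose_symm_add] at h
  calc
    _ = ((e + q + 1 + 1).choose (e + i + 1 + 1) * (e + i + 1 + 1)) * (e + i + 1) *
        (e + i).choose i := by ring
    _ = (e + q + 1 + 1) * ((e + q + 1).choose (e + i + 1) * (e + i + 1)) * (e + i).choose i := by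
      rw [← habsorb₁]; ring
    _ = (e + q + 1 + 1) * (e + q + 1) * ((e + q).choose (e + i) * (e + i).choose i) := by
      rw [← habsorb₂]; ring
    _ = _ := by rw [htrinomial]; ring

lemma fLk_eq_mul_sum (e q : ℕ) (x : ℝ) :
    fLk (e + q + 2) (q + 1) x = ((e + q + 2) * (e + q + 1) * (e + q).choose e : ℕ) *
      ∑ i ∈ Finset.range (q + 1), (-1) ^ i * (q.choose i : ℝ) / (e + i + 1 : ℕ) /
        (e + i + 1 + 1 : ℕ) * x ^ (e + i + 1 + 1) := by
  rw [fLk, ← Finset.Ico_add_one_right_eq_Icc, Finset.sum_Ico_eq_sum_range, Finset.mul_sum]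
  refine Finset.sum_congr (by simp) fun i _ ↦ ?_
  have hcoeff := congrArg (Nat.cast (R := ℝ)) (choose_mul_choose_mul_succ_mul_succ e q i)
  rw [show e + q + 2 - (q + 1) + (1 + i) = e + i + 2 by omega,
    show e + i + 2 - 2 = e + i by omega, Nat.add_sub_cancel_left]
  push_cast at hcoeff ⊢
  field_simp
  linear_combination x ^ (e + i + 2) * hcoeff

lemma fLk_self {L : ℕ} (hL : 1 ≤ L) (x : ℝ) : fLk L L x = L * x := by
  rw [fLk, Finset.sum_eq_single_of_mem 1 (Finset.mem_Icc.2 ⟨le_rfl, hL⟩)]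
  · simp
  · intro i hi hi1
    have hi2 : 1 ≤ i := (Finset.mem_Icc.1 hi).1
    rw [Nat.choose_eq_zero_of_lt (show L - L + i - 2 < i - 1 by omega)]
    simp

theorem monotoneOn_fLk {L k : ℕ} (hk : 1 ≤ k) (hkL : k ≤ L) :
    MonotoneOn (fLk L k) (Icc 0 1) := by
  obtain rfl | hlt := hkL.eq_or_lt
  · intro x _ y _ hxy
    rw [fLk_self hk, fLk_self hk]
    gcongr
  obtain ⟨q, rfl⟩ : ∃ q, k = q + 1 := ⟨k - 1, by omega⟩
  obtain ⟨e, rfl⟩ : ∃ e, L = e + q + 2 := ⟨L - q - 2, by omega⟩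
  rw [show fLk (e + q + 2) (q + 1) = _ from funext (fLk_eq_mul_sum e q)]
  refine monotoneOn_Icc_of_deriv2_nonneg
    (fun x _ ↦ ((hasDerivAt_sum_div_mul_pow_succ _ _ (fun i ↦ e + i + 1) x).const_mul _
      ).hasDerivWithinAt)
    (fun x _ ↦ ((hasDerivAt_sum_div_mul_pow_succ _ _ (fun i ↦ e + i) x).const_mul _
      ).hasDerivWithinAt) ?_ ?_
  · simp
  · intro x hx
    rw [sum_neg_one_pow_mul_choose_mul_pow]
    have hx0 : 0 ≤ x := hx.1.le
    have hx1 : 0 ≤ 1 - x := sub_nonneg.2 hx.2.le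
    positivity

lemma contDiff_fLk (L k : ℕ) {n : WithTop ℕ∞} : ContDiff ℝ n (fLk L k) := by
  unfold fLk
  fun_prop

lemma IsTruncSol.isChainSol {L k K : ℕ} {lam c : ℝ} {s : ℝ → ℕ → ℝ}
    (hs : IsTruncSol L k lam K c s) :
    IsChainSol (fun x ↦ lam * fLk L k x) k (K + 1) 1 c s where
  left_eq := hs.1
  right_eq := hs.2.1
  hasDerivWithinAt j hj hjK t ht := by
    simpa only [mul_sub] using hs.2.2 j hj (Nat.le_of_lt_succ hjK) t ht

/-- Lemma 5.1: if the initial conditions of the truncated system are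
ordered, `1 = s_0(0) ≥ s_1(0) ≥ … ≥ s_K(0) ≥ s_{K+1}(0) = c`, then they stay ordered:
`1 = s_0(t) ≥ s_1(t) ≥ … ≥ s_K(t) ≥ s_{K+1}(t) = c` for all `t ≥ 0`. -/
theorem truncSol_ordered (L k : ℕ) (hk : 1 ≤ k) (hkL : k ≤ L)
    (lam : ℝ) (hlam : 0 < lam) (K : ℕ) (c : ℝ) (hc : 0 ≤ c)
    (s : ℝ → ℕ → ℝ) (hs : IsTruncSol L k lam K c s)
    (hinit : ∀ j ≤ K, s 0 (j + 1) ≤ s 0 j) :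
    ∀ t ∈ Set.Ici (0 : ℝ), s t 0 = 1 ∧ s t (K + 1) = c ∧ ∀ j ≤ K, s t (j + 1) ≤ s t j := by
  intro t ht
  have hmono : MonotoneOn (fun x ↦ lam * fLk L k x) (Icc c 1) :=
    fun _ hx _ hy hxy ↦ mul_le_mul_of_nonneg_left
      (monotoneOn_fLk hk hkL (Icc_subset_Icc_left hc hx) (Icc_subset_Icc_left hc hy) hxy) hlam.le
  have hlip : LocallyLipschitz (fun x ↦ lam * fLk L k x) :=
    (contDiff_const.mul (contDiff_fLk L k)).locallyLipschitz
  exact ⟨hs.1 t ht, hs.2.1 t ht, fun j hj ↦ hs.isChainSol.succ_le k.cast_nonneg hlip hmono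
    (fun i hi ↦ hinit i (Nat.le_of_lt_succ hi)) t ht j (Nat.lt_succ_of_le hj)⟩
end
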